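/- Let γ ∈ ℝ \ {0} and γ̃ = √(3/π)·γ. There exist λ > 0, M > 0 and ε₀ > 0 such that for every 0 < ε ≤ ε₀ there exists a real-analytic function Φ_ε on S² such that Ψ̄_ε(t,θ,φ) := Φ_ε(θ, φ − γ̃t) is a travelling wave solution of the Euler equations on the non-rotating sphere (i.e. ∂_tΩ̄_ε + ∇⊥Ψ̄_ε·∇Ω̄_ε = 0 with Ω̄_ε = ΔΨ̄_ε), with ‖3γY₁⁰ − Φ_ε‖_{G_λ} ≤ Mε, and Φ_ε is non-zonal and non-trivial (in particular ⟨Φ_ε, Y₄²⟩ ≠ 0). -/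

import Mathlib

open MeasureTheory
open scoped ENNReal

noncomputable section

/-- Functions on the unit sphere, represented in colatitude-longitude coordinates `(θ, φ)`. -/
abbrev SphereFun : Type := ℝ → ℝ → ℝ

/-- The `L²` inner product on the sphere:
`⟨u,v⟩ = ∫₀^{2π} ∫₀^π u v sin θ dθ dφ`. -/
def sInner (u v : SphereFun) : ℝ :=
  ∫ φ in (0:ℝ)..(2*Real.pi), ∫ θ in (0:ℝ)..Real.pi, u θ φ * v θ φ * Real.sin θ

/-- Legendre polynomials via Rodrigues' formula. -/
def legP (n : ℕ) (s : ℝ) : ℝ :=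
  (1 / ((2:ℝ)^n * (Nat.factorial n : ℝ))) * iteratedDeriv n (fun x : ℝ => (x^2 - 1)^n) s

/-- Associated Legendre functions `P_n^m`. -/
def assocLegP (n m : ℕ) (s : ℝ) : ℝ :=
  (-1 : ℝ)^m * (1 - s^2) ^ ((m : ℝ)/2) * iteratedDeriv m (legP n) s

/-- Real spherical harmonics `Y_n^m`. -/
def Ynm (n : ℕ) (m : ℤ) : SphereFun := fun θ φ =>
  if m = 0 then
    Real.sqrt ((2*(n:ℝ)+1)/(4*Real.pi)) * legP n (Real.cos θ)
  else if 0 < m then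
    (-1 : ℝ)^(m.natAbs) * Real.sqrt 2 *
      Real.sqrt ((2*(n:ℝ)+1)/(4*Real.pi) *
        ((Nat.factorial (n - m.natAbs) : ℝ) / (Nat.factorial (n + m.natAbs) : ℝ))) *
      assocLegP n m.natAbs (Real.cos θ) * Real.cos ((m.natAbs : ℝ) * φ)
  else
    (-1 : ℝ)^(m.natAbs) * Real.sqrt 2 *
      Real.sqrt ((2*(n:ℝ)+1)/(4*Real.pi) *
        ((Nat.factorial (n - m.natAbs) : ℝ) / (Nat.factorial (n + m.natAbs) : ℝ))) *
      assocLegP n m.natAbs (Real.cos θ) * Real.sin ((m.natAbs : ℝ) * φ)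

/-- The spherical-harmonic coefficient `u_n^m = ⟨u, Y_n^m⟩`. -/
def coeff (u : SphereFun) (n : ℕ) (m : ℤ) : ℝ := sInner u (Ynm n m)

/-- `μ_n = n(n+1) + 1`. -/
def muSp (n : ℕ) : ℝ := (n:ℝ)*((n:ℝ)+1)+1

/-- Squared (inhomogeneous) Sobolev norm `‖u‖²_{H^k} = Σ μ_n^k |u_n^m|²`. -/
def sobNormSq (k : ℕ) (u : SphereFun) : ℝ≥0∞ :=
  ∑' p : ℕ × ℤ, if |p.2| ≤ (p.1 : ℤ) then
    ENNReal.ofReal ((muSp p.1)^k * (coeff u p.1 p.2)^2) else 0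

/-- Squared homogeneous Sobolev norm `‖u‖²_{Ḣ^k} = Σ_{n ≥ 1} λ_n^k |u_n^m|²`. -/
def dotNormSq (k : ℕ) (u : SphereFun) : ℝ≥0∞ :=
  ∑' p : ℕ × ℤ, if 1 ≤ p.1 ∧ |p.2| ≤ (p.1 : ℤ) then
    ENNReal.ofReal (((p.1:ℝ)*((p.1:ℝ)+1))^k * (coeff u p.1 p.2)^2) else 0

/-- Squared Gevrey norm `‖u‖²_{G_λ} = Σ_{n ≥ 1} μ_n² e^{2λ√μ_n} |u_n^m|²`. -/
def gevNormSq (lam : ℝ) (u : SphereFun) : ℝ≥0∞ :=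
  ∑' p : ℕ × ℤ, if 1 ≤ p.1 ∧ |p.2| ≤ (p.1 : ℤ) then
    ENNReal.ofReal ((muSp p.1)^2 * Real.exp (2*lam*Real.sqrt (muSp p.1)) *
      (coeff u p.1 p.2)^2) else 0

/-- `∂_θ`. -/
def dTheta (u : SphereFun) : SphereFun := fun θ φ => deriv (fun t => u t φ) θ

/-- `∂_φ`. -/
def dPhi (u : SphereFun) : SphereFun := fun θ φ => deriv (fun p => u θ p) φ

/-- The Laplace–Beltrami operator in colatitude-longitude coordinates:
`Δu = (1/sinθ)∂_θ(sinθ ∂_θu) + (1/sin²θ)∂²_φu`. -/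
def lapS (u : SphereFun) : SphereFun := fun θ φ =>
  (1 / Real.sin θ) * deriv (fun t => Real.sin t * dTheta u t φ) θ
  + (1 / (Real.sin θ)^2) * dPhi (dPhi u) θ φ

/-- A zonal function: one depending only on the colatitude `θ`. -/
def Zonal (u : SphereFun) : Prop := ∀ (θ φ₁ φ₂ : ℝ), u θ φ₁ = u θ φ₂

/-- Zonal on the coordinate chart `θ ∈ [0, π]`. -/
def ZonalOn (u : SphereFun) : Prop :=
  ∀ θ ∈ Set.Icc (0:ℝ) Real.pi, ∀ (φ₁ φ₂ : ℝ), u θ φ₁ = u θ φ₂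

/-- `2π`-periodicity in the longitude. -/
def PeriodicPhi (u : SphereFun) : Prop := ∀ θ φ, u θ (φ + 2*Real.pi) = u θ φ

/-- The advection term `U·∇f` for the velocity `U = ∇⊥Ψ`, i.e.
`(1/sinθ)∂_φΨ ∂_θf − ∂_θΨ (1/sinθ)∂_φf`. -/
def advect (Ψ f : SphereFun) : SphereFun := fun θ φ =>
  (1 / Real.sin θ) * dPhi Ψ θ φ * dTheta f θ φ
  - dTheta Ψ θ φ * ((1 / Real.sin θ) * dPhi f θ φ)

/-- Smoothness in the coordinates. -/
def SphSmooth (u : SphereFun) : Prop := ContDiff ℝ (⊤ : ℕ∞) (Function.uncurry u)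

/-- A function is trivial if it is a zonal function plus an element of
`span{Y₂^m : |m| ≤ 2}`; non-triviality is the negation of this. -/
def SphNontrivial (u : SphereFun) : Prop :=
  ¬ ∃ (z : SphereFun) (c : ℤ → ℝ), Zonal z ∧
      ∀ θ ∈ Set.Icc (0:ℝ) Real.pi, ∀ φ : ℝ,
        u θ φ = z θ φ + ∑ m ∈ Finset.Icc (-2 : ℤ) 2, c m * Ynm 2 m θ φ

/-- Real analyticity on the sphere, characterized by membership in a Gevrey class. -/
def RealAnalyticSphere (u : SphereFun) : Prop := ∃ lam > 0, gevNormSq lam u < ⊤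


section aux

/-- index set : pairs `(a,b)` with `a+b` odd -/
abbrev Idx : Type := {p : ℕ × ℕ // Odd (p.1 + p.2)}

abbrev L1 : Type := lp (fun _ : Idx => ℝ) 1

def bas (p : Idx) : L1 := lp.single 1 p (1:ℝ)

lemma norm_bas (p : Idx) : ‖bas p‖ = 1 := by
  unfold bas
  rw [lp.norm_single (by norm_num)]
  simp

lemma l1_summable (f : L1) : Summable (fun i => |f i|) := by
  simpa using f.2.summable

lemma l1_norm (f : L1) : ‖f‖ = ∑' i, |f i| := by
  rw [lp.norm_eq_tsum_rpow (by norm_num)]; simp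

lemma l1_hasSum (f : L1) : HasSum (fun i => f i • bas i) f := by
  have := lp.hasSum_single (p := 1) (by norm_num) f
  refine this.congr_fun ?_ |> fun h => h
  intro i
  unfold bas
  rw [← lp.single_smul]; simp

section lift
variable {E : Type*} [NormedAddCommGroup E] [NormedSpace ℝ E] [CompleteSpace E]

lemma lift_summable (b : Idx → E) (C : ℝ) (hb : ∀ i, ‖b i‖ ≤ C) (f : L1) :
    Summable (fun i => ‖f i • b i‖) := by
  refine Summable.of_nonneg_of_le (fun i => norm_nonneg _) (fun i => ?_) ((l1_summable f).mul_right C)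
  rw [norm_smul, Real.norm_eq_abs]
  exact mul_le_mul_of_nonneg_left (hb i) (abs_nonneg _)

def lift (b : Idx → E) (C : ℝ) (hb : ∀ i, ‖b i‖ ≤ C) : L1 →L[ℝ] E :=
  LinearMap.mkContinuous
    { toFun := fun f => ∑' i, f i • b i
      map_add' := fun f g => by
        rw [← (lift_summable b C hb f).of_norm.tsum_add (lift_summable b C hb g).of_norm]
        congr 1; ext i; simp [add_smul]
      map_smul' := fun c f => by
        rw [RingHom.id_apply, ← (lift_summable b C hb f).of_norm.tsum_const_smul]
        congr 1; ext i; simp [mul_smul] } C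
    (fun f => by
      change ‖∑' i, f i • b i‖ ≤ C * ‖f‖
      refine (norm_tsum_le_tsum_norm (lift_summable b C hb f)).trans ?_
      rw [l1_norm, mul_comm, ← tsum_mul_right]
      refine (lift_summable b C hb f).tsum_le_tsum (fun i => ?_) ((l1_summable f).mul_right C)
      rw [norm_smul, Real.norm_eq_abs]
      exact mul_le_mul_of_nonneg_left (hb i) (abs_nonneg _))

lemma lift_apply (b : Idx → E) (C : ℝ) (hb : ∀ i, ‖b i‖ ≤ C) (f : L1) :
    lift b C hb f = ∑' i, f i • b i := rfl

lemma lift_bas (b : Idx → E) (C : ℝ) (hb : ∀ i, ‖b i‖ ≤ C) (i : Idx) :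
    lift b C hb (bas i) = b i := by
  rw [lift_apply, tsum_eq_single i]
  · simp [bas]
  · intro j hj
    simp [bas, Pi.single_eq_of_ne hj]

lemma clm_ext (f g : L1 →L[ℝ] E) (h : ∀ i, f (bas i) = g (bas i)) : f = g := by
  ext u
  have h1 := (l1_hasSum u).mapL f
  have h2 := (l1_hasSum u).mapL g
  simp only [map_smul, h] at h1 h2
  exact h1.unique h2

lemma clm_bound (f : L1 →L[ℝ] E) (C : ℝ) (h : ∀ i, ‖f (bas i)‖ ≤ C) (u : L1) : ‖f u‖ ≤ C * ‖u‖ := by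
  have h1 := (l1_hasSum u).mapL f
  simp only [map_smul] at h1
  rw [← h1.tsum_eq, l1_norm, mul_comm, ← tsum_mul_right]
  have hs : Summable (fun i => ‖u i • f (bas i)‖) := by
    refine Summable.of_nonneg_of_le (fun i => norm_nonneg _) (fun i => ?_) ((l1_summable u).mul_right C)
    rw [norm_smul, Real.norm_eq_abs]
    exact mul_le_mul_of_nonneg_left (h i) (abs_nonneg _)
  refine (norm_tsum_le_tsum_norm hs).trans ?_
  refine hs.tsum_le_tsum (fun i => ?_) ((l1_summable u).mul_right C)
  rw [norm_smul, Real.norm_eq_abs]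
  exact mul_le_mul_of_nonneg_left (h i) (abs_nonneg _)

end lift

/-- coordinate functional -/
def coord (p : Idx) : L1 →L[ℝ] ℝ :=
  lift (fun i => if i = p then 1 else 0) 1 (fun i => by split_ifs <;> simp)

lemma coord_bas (p q : Idx) : coord p (bas q) = if q = p then 1 else 0 := by
  rw [coord, lift_bas]

lemma coord_apply (p : Idx) (u : L1) : coord p u = u p := by
  rw [coord, lift_apply, tsum_eq_single p]
  · simp
  · intro j hj; simp [hj]

def add3 (i j k : Idx) : Idx :=
  ⟨(i.1.1 + j.1.1 + k.1.1, i.1.2 + j.1.2 + k.1.2), by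
    obtain ⟨⟨a,b⟩,h⟩ := i; obtain ⟨⟨a',b'⟩,h'⟩ := j; obtain ⟨⟨a'',b''⟩,h''⟩ := k
    simp only at *
    have := (h.add_odd h').add_odd h''
    convert this using 1; ring⟩

def M1 (i j : Idx) : L1 →L[ℝ] L1 := lift (fun k => bas (add3 i j k)) 1 (fun k => (norm_bas _).le)

lemma M1_norm (i j : Idx) : ‖M1 i j‖ ≤ 1 :=
  ContinuousLinearMap.opNorm_le_bound _ zero_le_one
    (fun u => clm_bound _ 1 (fun k => by rw [M1, lift_bas]; exact (norm_bas _).le) u)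

def M2 (i : Idx) : L1 →L[ℝ] L1 →L[ℝ] L1 := lift (fun j => M1 i j) 1 (fun j => M1_norm i j)

lemma M2_norm (i : Idx) : ‖M2 i‖ ≤ 1 :=
  ContinuousLinearMap.opNorm_le_bound _ zero_le_one
    (fun u => clm_bound _ 1 (fun k => by rw [M2, lift_bas]; exact M1_norm _ _) u)

def M3 : L1 →L[ℝ] L1 →L[ℝ] L1 →L[ℝ] L1 := lift M2 1 M2_norm

lemma M3_bas (i j k : Idx) : M3 (bas i) (bas j) (bas k) = bas (add3 i j k) := by
  simp [M3, lift_bas, M2, M1]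

/-- dimension weight -/
def deg (p : Idx) : ℕ := p.1.1 + 2 * p.1.2

/-- a multiplicative functional intertwines `M3` with the cube -/
lemma M3_mult (f : L1 →L[ℝ] ℝ) (hf : ∀ i j k, f (bas (add3 i j k)) = f (bas i) * f (bas j) * f (bas k))
    (u v w : L1) : f (M3 u v w) = f u * f v * f w := by
  have h1 : ∀ i j, f ∘L (M3 (bas i) (bas j)) = (f (bas i) * f (bas j)) • f := by
    intro i j
    apply clm_ext
    intro k
    simp [M3_bas, hf]
  have h2 : ∀ i, f ∘L ((M3 (bas i)).flip w)
      = (f (bas i) * f w) • f := by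
    intro i
    apply clm_ext
    intro j
    have := congrArg (fun T => T w) (h1 i j)
    simp at this ⊢
    rw [this]; ring
  have h3 : f ∘L (((M3.flip v)).flip w) = (f v * f w) • f := by
    apply clm_ext
    intro i
    have := congrArg (fun T => T v) (h2 i)
    simp at this ⊢
    rw [this]; ring
  have := congrArg (fun T => T u) h3
  simp at this
  rw [this]; ring


open scoped ContDiff in
def Bd (f : ℝ × ℝ → ℝ) (c A : ℝ) : Prop :=
  ContDiff ℝ ∞ f ∧ ∀ (k : ℕ) (x : ℝ × ℝ), ‖iteratedFDeriv ℝ k f x‖ ≤ c * A ^ k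

lemma Bd.mul {f g : ℝ × ℝ → ℝ} {c c' A A' : ℝ} (hf : Bd f c A) (hg : Bd g c' A') :
    Bd (fun x => f x * g x) (c * c') (A + A') := by
  refine ⟨hf.1.mul hg.1, fun k x => ?_⟩
  refine (norm_iteratedFDeriv_mul_le hf.1 hg.1 x (n := k) (by exact_mod_cast le_top)).trans ?_
  rw [add_pow, Finset.mul_sum]
  refine Finset.sum_le_sum fun i hi => ?_
  have h1 := hf.2 i x
  have h2 := hg.2 (k - i) x
  calc _ = (k.choose i : ℝ) * (‖iteratedFDeriv ℝ i f x‖ * ‖iteratedFDeriv ℝ (k - i) g x‖) := by ring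
    _ ≤ (k.choose i : ℝ) * ((c * A ^ i) * (c' * A' ^ (k - i))) := by
        refine mul_le_mul_of_nonneg_left ?_ (by positivity)
        exact mul_le_mul h1 h2 (norm_nonneg _) ((norm_nonneg _).trans h1)
    _ = _ := by ring

lemma Bd.const (c : ℝ) : Bd (fun _ => c) |c| 0 := by
  refine ⟨contDiff_const, fun k x => ?_⟩
  rcases k with _ | k
  · simp
  · simp [iteratedFDeriv_succ_const]

lemma Bd.pow {f : ℝ × ℝ → ℝ} {A : ℝ} (hf : Bd f 1 A) (n : ℕ) :
    Bd (fun x => f x ^ n) 1 (n * A) := by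
  induction n with
  | zero => simpa using Bd.const 1
  | succ n ih =>
    have := ih.mul hf
    simp only [pow_succ]
    convert this using 1
    · norm_num
    · push_cast; ring

lemma iter_cos (n : ℕ) (x : ℝ) : |iteratedDeriv n Real.cos x| ≤ 1 :=
  Real.abs_iteratedDeriv_cos_le_one n x
lemma iter_sin (n : ℕ) (x : ℝ) : |iteratedDeriv n Real.sin x| ≤ 1 :=
  Real.abs_iteratedDeriv_sin_le_one n x

open scoped ContDiff in
lemma Bd.compL (h : ℝ → ℝ) (hh : ContDiff ℝ ∞ h) (hb : ∀ n x, |iteratedDeriv n h x| ≤ 1)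
    (T : ℝ × ℝ →L[ℝ] ℝ) (A : ℝ) (hT : ‖T‖ ≤ A) : Bd (fun x => h (T x)) 1 A := by
  refine ⟨hh.comp T.contDiff, fun k x => ?_⟩
  have : (fun x => h (T x)) = h ∘ T := rfl
  rw [this, T.iteratedFDeriv_comp_right hh x (i := k) (by exact_mod_cast le_top)]
  refine (ContinuousMultilinearMap.norm_compContinuousLinearMap_le _ _).trans ?_
  have h1 : ‖iteratedFDeriv ℝ k h (T x)‖ ≤ 1 := by
    rw [norm_iteratedFDeriv_eq_norm_iteratedDeriv]; exact hb _ _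
  simp only [Finset.prod_const, Finset.card_univ, Fintype.card_fin]
  exact mul_le_mul h1 (pow_le_pow_left₀ (norm_nonneg _) hT k) (by positivity) zero_le_one

lemma Bd_cos : Bd (fun x => Real.cos x.1) 1 1 :=
  Bd.compL _ Real.contDiff_cos iter_cos (ContinuousLinearMap.fst ℝ ℝ ℝ) 1
    (ContinuousLinearMap.norm_fst_le ..)
lemma Bd_sin : Bd (fun x => Real.sin x.1) 1 1 :=
  Bd.compL _ Real.contDiff_sin iter_sin (ContinuousLinearMap.fst ℝ ℝ ℝ) 1
    (ContinuousLinearMap.norm_fst_le ..)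
lemma Bd_cos2 : Bd (fun x => Real.cos (2 * x.2)) 1 2 :=
  Bd.compL _ Real.contDiff_cos iter_cos ((2:ℝ) • ContinuousLinearMap.snd ℝ ℝ ℝ) 2
    (by
      rw [norm_smul]
      have := ContinuousLinearMap.norm_snd_le ℝ ℝ ℝ
      simp only [Real.norm_ofNat]; linarith)

def rr : ℝ := 1 / 1000
lemma rr_pos : 0 < rr := by norm_num [rr]
lemma rr_lt : rr < 1 := by norm_num [rr]

def mono (p : Idx) : SphereFun := fun θ φ =>
  rr ^ deg p * (Real.cos θ ^ p.1.1 * (Real.sin θ ^ 2 * Real.cos (2 * φ)) ^ p.1.2)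

lemma Bd_mono (p : Idx) : Bd (Function.uncurry (mono p)) (rr ^ deg p) (p.1.1 + 4 * p.1.2) := by
  have h := (Bd.const (rr ^ deg p)).mul
    ((Bd_cos.pow p.1.1).mul ((by simpa using ((Bd_sin.pow 2).mul Bd_cos2) : Bd (fun x : ℝ × ℝ => Real.sin x.1 ^ 2 * Real.cos (2 * x.2)) 1 (2+2)).pow p.1.2))
  rw [abs_of_pos (pow_pos rr_pos _)] at h
  convert h using 1
  · rfl
  · ring
  · ring

/-- good families of functions -/
def Good (G : Idx → SphereFun) : Prop :=
  (∀ p, SphSmooth (G p)) ∧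
    ∀ k : ℕ, ∃ C : ℝ, ∀ p x, ‖iteratedFDeriv ℝ k (Function.uncurry (G p)) x‖ ≤ C

lemma good_mono : Good mono := by
  refine ⟨fun p => (Bd_mono p).1, fun k => ?_⟩
  have h := tendsto_pow_const_mul_const_pow_of_lt_one k rr_pos.le rr_lt
  obtain ⟨C, hC⟩ := h.bddAbove_range
  refine ⟨2 ^ k * C, fun p x => ((Bd_mono p).2 k x).trans ?_⟩
  have h1 : ((p.1.1 : ℝ) + 4 * p.1.2) ^ k ≤ (2 * (deg p : ℝ)) ^ k := by
    refine pow_le_pow_left₀ (by positivity) ?_ k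
    unfold deg; push_cast; linarith [(Nat.cast_nonneg p.1.1 : (0:ℝ) ≤ _)]
  have h2 : (deg p : ℝ) ^ k * rr ^ deg p ≤ C := hC ⟨deg p, rfl⟩
  calc _ ≤ rr ^ deg p * (2 * (deg p : ℝ)) ^ k := mul_le_mul_of_nonneg_left h1 (pow_pos rr_pos _).le
    _ = 2 ^ k * ((deg p : ℝ) ^ k * rr ^ deg p) := by rw [mul_pow]; ring
    _ ≤ _ := mul_le_mul_of_nonneg_left h2 (by positivity)

def ser (G : Idx → SphereFun) (u : L1) : SphereFun := fun θ φ => ∑' p, u p * G p θ φ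

lemma Good.bound0 {G : Idx → SphereFun} (hG : Good G) : ∃ C, ∀ p θ φ, |G p θ φ| ≤ C := by
  obtain ⟨C, hC⟩ := hG.2 0
  exact ⟨C, fun p θ φ => by simpa using hC p (θ, φ)⟩

lemma Good.summable {G : Idx → SphereFun} (hG : Good G) (u : L1) (θ φ : ℝ) :
    Summable (fun p => u p * G p θ φ) := by
  obtain ⟨C, hC⟩ := hG.bound0
  refine Summable.of_norm_bounded ((l1_summable u).mul_right C) fun p => ?_
  rw [norm_mul]
  exact mul_le_mul_of_nonneg_left (hC _ _ _) (abs_nonneg _)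

lemma Good.smooth {G : Idx → SphereFun} (hG : Good G) (u : L1) : SphSmooth (ser G u) := by
  choose C hC using hG.2
  have : Function.uncurry (ser G u) = fun x => ∑' p, u p • Function.uncurry (G p) x := by
    ext ⟨a, b⟩; simp [ser]
  unfold SphSmooth
  rw [this]
  refine contDiff_tsum (v := fun k p => |u p| * C k) (fun p => (hG.1 p).const_smul (u p))
    (fun k _ => (l1_summable u).mul_right _) (fun k p x _ => ?_)
  have := iteratedFDeriv_const_smul_apply' (a := u p) (f := Function.uncurry (G p)) (x := x) (i := k) (𝕜 := ℝ)
    ((hG.1 p).contDiffAt.of_le (by exact_mod_cast le_top))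
  rw [this, norm_smul, Real.norm_eq_abs]
  exact mul_le_mul_of_nonneg_left (hC k p x) (abs_nonneg _)

lemma smooth_hasDeriv_theta {f : SphereFun} (hf : SphSmooth f) (θ φ : ℝ) :
    HasDerivAt (fun t => f t φ) (fderiv ℝ (Function.uncurry f) (θ, φ) (1, 0)) θ := by
  have h1 : HasFDerivAt (Function.uncurry f) (fderiv ℝ (Function.uncurry f) (θ, φ)) (θ, φ) :=
    (hf.differentiable (by simp) _).hasFDerivAt
  have h2 : HasDerivAt (fun t : ℝ => (t, φ)) (1, 0) θ := (hasDerivAt_id θ).prodMk (hasDerivAt_const _ _)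
  exact h1.comp_hasDerivAt θ h2

lemma smooth_hasDeriv_phi {f : SphereFun} (hf : SphSmooth f) (θ φ : ℝ) :
    HasDerivAt (fun t => f θ t) (fderiv ℝ (Function.uncurry f) (θ, φ) (0, 1)) φ := by
  have h1 : HasFDerivAt (Function.uncurry f) (fderiv ℝ (Function.uncurry f) (θ, φ)) (θ, φ) :=
    (hf.differentiable (by simp) _).hasFDerivAt
  have h2 : HasDerivAt (fun t : ℝ => (θ, t)) (0, 1) φ := (hasDerivAt_const _ _).prodMk (hasDerivAt_id φ)
  exact h1.comp_hasDerivAt φ h2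

lemma dTheta_unc {f : SphereFun} (hf : SphSmooth f) :
    Function.uncurry (dTheta f) = fun x => fderiv ℝ (Function.uncurry f) x (1, 0) := by
  ext ⟨a, b⟩; exact (smooth_hasDeriv_theta hf a b).deriv
lemma dPhi_unc {f : SphereFun} (hf : SphSmooth f) :
    Function.uncurry (dPhi f) = fun x => fderiv ℝ (Function.uncurry f) x (0, 1) := by
  ext ⟨a, b⟩; exact (smooth_hasDeriv_phi hf a b).deriv

lemma dTheta_has {f : SphereFun} (hf : SphSmooth f) (θ φ : ℝ) :
    HasDerivAt (fun t => f t φ) (dTheta f θ φ) θ := by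
  have := smooth_hasDeriv_theta hf θ φ
  rwa [← this.deriv] at this
lemma dPhi_has {f : SphereFun} (hf : SphSmooth f) (θ φ : ℝ) :
    HasDerivAt (fun t => f θ t) (dPhi f θ φ) φ := by
  have := smooth_hasDeriv_phi hf θ φ
  rwa [← this.deriv] at this

open scoped ContDiff in
lemma dir_smooth (f : ℝ × ℝ → ℝ) (hf : ContDiff ℝ ∞ f) (v : ℝ × ℝ) :
    ContDiff ℝ ∞ (fun x => fderiv ℝ f x v) :=
  (hf.fderiv_right (m := ∞) (by simp)).clm_apply contDiff_const

lemma dTheta_smooth {f : SphereFun} (hf : SphSmooth f) : SphSmooth (dTheta f) := by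
  unfold SphSmooth; rw [dTheta_unc hf]; exact dir_smooth _ hf _
lemma dPhi_smooth {f : SphereFun} (hf : SphSmooth f) : SphSmooth (dPhi f) := by
  unfold SphSmooth; rw [dPhi_unc hf]; exact dir_smooth _ hf _

open scoped ContDiff in
lemma dir_bound (f : ℝ × ℝ → ℝ) (hf : ContDiff ℝ ∞ f) (v : ℝ × ℝ) (hv : ‖v‖ ≤ 1) (k : ℕ) (x : ℝ × ℝ) :
    ‖iteratedFDeriv ℝ k (fun x => fderiv ℝ f x v) x‖ ≤ ‖iteratedFDeriv ℝ (k+1) f x‖ := by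
  have h1 : (fun x => fderiv ℝ f x v) = (ContinuousLinearMap.apply ℝ ℝ v) ∘ (fderiv ℝ f) := by
    ext x; simp
  rw [h1]
  refine (ContinuousLinearMap.norm_iteratedFDeriv_comp_left _
    (hf.fderiv_right (m := ∞) (by simp)).contDiffAt (by exact_mod_cast le_top)).trans ?_
  rw [norm_iteratedFDeriv_fderiv]
  refine mul_le_of_le_one_left (norm_nonneg _) ?_
  refine ContinuousLinearMap.opNorm_le_bound _ zero_le_one fun T => ?_
  simp only [ContinuousLinearMap.apply_apply, one_mul]
  exact (T.le_opNorm v).trans (mul_le_of_le_one_right (norm_nonneg _) hv)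

lemma Good.dTheta {G : Idx → SphereFun} (hG : Good G) : Good (fun p => dTheta (G p)) := by
  refine ⟨fun p => dTheta_smooth (hG.1 p), fun k => ?_⟩
  obtain ⟨C, hC⟩ := hG.2 (k+1)
  refine ⟨C, fun p x => ?_⟩
  rw [dTheta_unc (hG.1 p)]
  exact (dir_bound _ (hG.1 p) _ (by simp [Prod.norm_def]) k x).trans (hC p x)
lemma Good.dPhi {G : Idx → SphereFun} (hG : Good G) : Good (fun p => dPhi (G p)) := by
  refine ⟨fun p => dPhi_smooth (hG.1 p), fun k => ?_⟩
  obtain ⟨C, hC⟩ := hG.2 (k+1)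
  refine ⟨C, fun p x => ?_⟩
  rw [dPhi_unc (hG.1 p)]
  exact (dir_bound _ (hG.1 p) _ (by simp [Prod.norm_def]) k x).trans (hC p x)

lemma Good.dTheta_ser {G : Idx → SphereFun} (hG : Good G) (u : L1) :
    _root_.dTheta (ser G u) = ser (fun p => _root_.dTheta (G p)) u := by
  ext θ φ
  obtain ⟨C, hC⟩ := hG.dTheta.bound0
  have := hasDerivAt_tsum (u := fun p => |u p| * C) (g := fun p t => u p * G p t φ)
    (g' := fun p t => u p * _root_.dTheta (G p) t φ) (y₀ := θ)
    ((l1_summable u).mul_right _) (fun p y => (dTheta_has (hG.1 p) y φ).const_mul _)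
    (fun p y => by
      rw [norm_mul]; exact mul_le_mul_of_nonneg_left (hC _ _ _) (abs_nonneg _))
    (hG.summable u θ φ) θ
  exact this.deriv
lemma Good.dPhi_ser {G : Idx → SphereFun} (hG : Good G) (u : L1) :
    _root_.dPhi (ser G u) = ser (fun p => _root_.dPhi (G p)) u := by
  ext θ φ
  obtain ⟨C, hC⟩ := hG.dPhi.bound0
  have := hasDerivAt_tsum (u := fun p => |u p| * C) (g := fun p t => u p * G p θ t)
    (g' := fun p t => u p * _root_.dPhi (G p) θ t) (y₀ := φ)
    ((l1_summable u).mul_right _) (fun p y => (dPhi_has (hG.1 p) θ y).const_mul _)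
    (fun p y => by
      rw [norm_mul]; exact mul_le_mul_of_nonneg_left (hC _ _ _) (abs_nonneg _))
    (hG.summable u θ φ) φ
  exact this.deriv

lemma lapS_eq {f : SphereFun} (hf : SphSmooth f) (θ φ : ℝ) :
    lapS f θ φ = (1 / Real.sin θ) * (Real.cos θ * dTheta f θ φ + Real.sin θ * dTheta (dTheta f) θ φ)
      + (1 / (Real.sin θ)^2) * dPhi (dPhi f) θ φ := by
  unfold lapS
  have h : HasDerivAt (fun t => Real.sin t * dTheta f t φ) _ θ :=
    (Real.hasDerivAt_sin θ).mul (dTheta_has (dTheta_smooth hf) θ φ)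
  rw [h.deriv]

lemma lapS_ser {G : Idx → SphereFun} (hG : Good G) (u : L1) (θ φ : ℝ) :
    lapS (ser G u) θ φ = ∑' p, u p * lapS (G p) θ φ := by
  rw [lapS_eq (hG.smooth u), hG.dTheta_ser, hG.dTheta.dTheta_ser, hG.dPhi_ser, hG.dPhi.dPhi_ser]
  simp only [ser]
  have h1 := (hG.dTheta.summable u θ φ)
  have h2 := (hG.dTheta.dTheta.summable u θ φ)
  have h3 := (hG.dPhi.dPhi.summable u θ φ)
  rw [← tsum_mul_left, ← tsum_mul_left, ← tsum_mul_left,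
    ← (h1.mul_left _).tsum_add (h2.mul_left _), ← tsum_mul_left,
    ← (((h1.mul_left _).add (h2.mul_left _)).mul_left _).tsum_add (h3.mul_left _)]
  congr 1; ext p
  rw [lapS_eq (hG.1 p)]; ring


def idx (a b : ℕ) : Idx := if h : Odd (a + b) then ⟨(a, b), h⟩ else ⟨(1, 0), by decide⟩

lemma idx_of {a b : ℕ} (h : Odd (a + b)) : idx a b = ⟨(a, b), h⟩ := by simp [idx, h]

lemma lapS_raw (c : ℝ) (a b : ℕ) (θ φ : ℝ) (hs : Real.sin θ ≠ 0) :
    lapS (fun θ φ => c * (Real.cos θ ^ a * (Real.sin θ ^ 2 * Real.cos (2 * φ)) ^ b)) θ φ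
    = c * (-(((a:ℝ) + 2 * b) * (a + 2 * b + 1)) * (Real.cos θ ^ a * (Real.sin θ ^ 2 * Real.cos (2 * φ)) ^ b)
      + a * (a - 1) * (Real.cos θ ^ (a - 2) * (Real.sin θ ^ 2 * Real.cos (2 * φ)) ^ b)
      + 4 * b * (b - 1) * (Real.cos θ ^ a * (Real.sin θ ^ 2 * Real.cos (2 * φ)) ^ (b - 2)
          - Real.cos θ ^ (a + 2) * (Real.sin θ ^ 2 * Real.cos (2 * φ)) ^ (b - 2))) := by
  set f : SphereFun := fun θ φ => c * (Real.cos θ ^ a * (Real.sin θ ^ 2 * Real.cos (2 * φ)) ^ b) with hf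
  have h1 : ∀ t φ, HasDerivAt (fun t => f t φ)
      (c * ((a * Real.cos t ^ (a - 1) * (-Real.sin t)) * (Real.sin t ^ 2 * Real.cos (2 * φ)) ^ b
        + Real.cos t ^ a * (b * (Real.sin t ^ 2 * Real.cos (2 * φ)) ^ (b - 1)
            * ((2 : ℕ) * Real.sin t ^ (2 - 1) * Real.cos t * Real.cos (2 * φ))))) t := by
    intro t φ
    exact (((Real.hasDerivAt_cos t).pow a).mul
      ((((Real.hasDerivAt_sin t).pow 2).mul_const (Real.cos (2 * φ))).pow b)).const_mul c
  have h2 : ∀ t φ, HasDerivAt (fun φ => f t φ)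
      (c * (Real.cos t ^ a * (b * (Real.sin t ^ 2 * Real.cos (2 * φ)) ^ (b - 1)
            * (Real.sin t ^ 2 * (-Real.sin (2 * φ) * (2 * 1)))))) φ := by
    intro t φ
    have h0 : HasDerivAt (fun φ : ℝ => Real.cos (2 * φ)) (-Real.sin (2 * φ) * (2 * 1)) φ :=
      (Real.hasDerivAt_cos (2 * φ)).comp φ ((hasDerivAt_id φ).const_mul 2)
    exact (((h0.const_mul (Real.sin t ^ 2)).pow b).const_mul (Real.cos t ^ a)).const_mul c
  have e1 : dTheta f = fun t φ => (c * ((a * Real.cos t ^ (a - 1) * (-Real.sin t)) * (Real.sin t ^ 2 * Real.cos (2 * φ)) ^ b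
        + Real.cos t ^ a * (b * (Real.sin t ^ 2 * Real.cos (2 * φ)) ^ (b - 1)
            * ((2 : ℕ) * Real.sin t ^ (2 - 1) * Real.cos t * Real.cos (2 * φ))))) := by
    ext t φ; exact (h1 t φ).deriv
  have e2 : dPhi f = fun t φ => (c * (Real.cos t ^ a * (b * (Real.sin t ^ 2 * Real.cos (2 * φ)) ^ (b - 1)
            * (Real.sin t ^ 2 * (-Real.sin (2 * φ) * (2 * 1)))))) := by
    ext t φ; exact (h2 t φ).deriv
  unfold lapS
  rw [e1, e2]
  have h3 : HasDerivAt (fun t => Real.sin t * (c * ((a * Real.cos t ^ (a - 1) * (-Real.sin t)) * (Real.sin t ^ 2 * Real.cos (2 * φ)) ^ b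
        + Real.cos t ^ a * (b * (Real.sin t ^ 2 * Real.cos (2 * φ)) ^ (b - 1)
            * ((2 : ℕ) * Real.sin t ^ (2 - 1) * Real.cos t * Real.cos (2 * φ)))))) _ θ :=
    (Real.hasDerivAt_sin θ).mul ((((((((Real.hasDerivAt_cos θ).pow (a-1)).const_mul (a:ℝ)).mul (Real.hasDerivAt_sin θ).neg).mul
      ((((Real.hasDerivAt_sin θ).pow 2).mul_const (Real.cos (2 * φ))).pow b))).add
      (((Real.hasDerivAt_cos θ).pow a).mul
        ((((((Real.hasDerivAt_sin θ).pow 2).mul_const (Real.cos (2 * φ))).pow (b-1)).const_mul (b:ℝ)).mul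
          (((((Real.hasDerivAt_sin θ).pow (2-1)).const_mul ((2:ℕ):ℝ)).mul (Real.hasDerivAt_cos θ)).mul_const (Real.cos (2 * φ)))))).const_mul c)
  have h0 : HasDerivAt (fun φ : ℝ => Real.cos (2 * φ)) (-Real.sin (2 * φ) * (2 * 1)) φ :=
      (Real.hasDerivAt_cos (2 * φ)).comp φ ((hasDerivAt_id φ).const_mul 2)
  have h0' : HasDerivAt (fun φ : ℝ => Real.sin (2 * φ)) (Real.cos (2 * φ) * (2 * 1)) φ :=
      (Real.hasDerivAt_sin (2 * φ)).comp φ ((hasDerivAt_id φ).const_mul 2)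
  have h4 : HasDerivAt (fun φ => c * (Real.cos θ ^ a * (b * (Real.sin θ ^ 2 * Real.cos (2 * φ)) ^ (b - 1)
            * (Real.sin θ ^ 2 * (-Real.sin (2 * φ) * (2 * 1)))))) _ φ :=
    ((((((h0.const_mul (Real.sin θ ^ 2)).pow (b-1)).const_mul (b:ℝ)).mul
      ((h0'.neg.mul_const (2*1)).const_mul (Real.sin θ ^ 2))).const_mul (Real.cos θ ^ a))).const_mul c
  have h5 : dPhi (fun t φ => c * (Real.cos t ^ a * (b * (Real.sin t ^ 2 * Real.cos (2 * φ)) ^ (b - 1)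
            * (Real.sin t ^ 2 * (-Real.sin (2 * φ) * (2 * 1)))))) θ φ = _ := h4.deriv
  rw [h5, h3.deriv]
  simp only [Pi.pow_apply, Pi.mul_apply, Pi.neg_apply, Pi.add_apply]
  clear h1 h2 h3 h4 h5 e1 e2 h0 h0' hf f
  have hc : Real.cos θ ^ 2 = 1 - Real.sin θ ^ 2 := by
    linarith [Real.sin_sq_add_cos_sq θ]
  have hS : Real.sin (2 * φ) ^ 2 = 1 - Real.cos (2 * φ) ^ 2 := by
    linarith [Real.sin_sq_add_cos_sq (2 * φ)]
  generalize Real.sin (2 * φ) = S at *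
  generalize Real.cos (2 * φ) = C at *
  generalize Real.sin θ = s at *
  generalize Real.cos θ = z at *
  have hs2 : s ^ 2 = 1 - z ^ 2 := by linarith
  have hp : ∀ (x : ℝ) (n : ℕ), x ^ (n + 1) = x ^ n * x := fun x n => pow_succ x n
  rcases a with _ | _ | a <;> rcases b with _ | _ | b <;>
  simp only [Nat.add_sub_cancel, Nat.zero_sub, Nat.sub_self, Nat.reduceAdd, Nat.reduceSub, Nat.add_one_sub_one, Nat.reduceSubDiff, Nat.cast_add, Nat.cast_one, Nat.cast_zero, Nat.cast_ofNat, pow_zero, pow_one, zero_add, hp, add_zero, zero_mul, mul_zero]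
  all_goals try generalize z ^ a = Z
  all_goals try generalize (s ^ 2 * C) ^ b = W
  all_goals try field_simp
  all_goals try grind

def Rv (p : Idx) : L1 :=
  (rr ^ 2 * (p.1.1 * (p.1.1 - 1)) : ℝ) • bas (idx (p.1.1 - 2) p.1.2)
  + (4 * (p.1.2 * (p.1.2 - 1)) : ℝ) • (rr ^ 4 • bas (idx p.1.1 (p.1.2 - 2)) - rr ^ 2 • bas (idx (p.1.1 + 2) (p.1.2 - 2)))

lemma nat_sq_nonneg (a : ℕ) : (0:ℝ) ≤ a * (a - 1) := by
  rcases a with _ | a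
  · simp
  · push_cast; simp; positivity

lemma Rv_norm (p : Idx) : ‖Rv p‖ ≤ 2 * rr ^ 2 * (deg p : ℝ) ^ 2 := by
  have ha := nat_sq_nonneg p.1.1
  have hb := nat_sq_nonneg p.1.2
  have h1 : ‖Rv p‖ ≤ rr ^ 2 * (p.1.1 * (p.1.1 - 1)) + 4 * (p.1.2 * (p.1.2 - 1)) * (rr ^ 4 + rr ^ 2) := by
    unfold Rv
    refine (norm_add_le _ _).trans (add_le_add ?_ ?_)
    · rw [norm_smul, norm_bas, mul_one, Real.norm_eq_abs, abs_of_nonneg (by positivity)]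
    · rw [norm_smul, Real.norm_eq_abs, abs_of_nonneg (by positivity)]
      refine mul_le_mul_of_nonneg_left ?_ (by positivity)
      refine (norm_sub_le _ _).trans (add_le_add ?_ ?_) <;>
      rw [norm_smul, norm_bas, mul_one, Real.norm_eq_abs, abs_of_nonneg (by unfold rr; positivity)]
  refine h1.trans ?_
  unfold deg
  push_cast
  have h2 : rr ^ 4 ≤ rr ^ 2 := pow_le_pow_of_le_one rr_pos.le rr_lt.le (by norm_num)
  have hr : 0 < rr ^ 2 := pow_pos rr_pos 2
  have h3 : 4 * ((p.1.2:ℝ) * (p.1.2 - 1)) * (rr ^ 4 + rr ^ 2) ≤ 4 * ((p.1.2:ℝ) * (p.1.2 - 1)) * (rr ^ 2 + rr ^ 2) :=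
    mul_le_mul_of_nonneg_left (by linarith) (by positivity)
  have h4 : ((p.1.1:ℝ) * (p.1.1 - 1)) + 8 * ((p.1.2:ℝ) * (p.1.2 - 1)) ≤ 2 * (p.1.1 + 2 * p.1.2) ^ 2 := by
    nlinarith [(Nat.cast_nonneg p.1.1 : (0:ℝ) ≤ _), (Nat.cast_nonneg p.1.2 : (0:ℝ) ≤ _), mul_nonneg (Nat.cast_nonneg p.1.1 : (0:ℝ) ≤ _) (Nat.cast_nonneg p.1.2 : (0:ℝ) ≤ _)]
  nlinarith

def dinv (p : Idx) : ℝ := if 3 ≤ deg p then -(1 / ((deg p : ℝ) ^ 2 + deg p - 6)) else 0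

lemma dinv_abs (p : Idx) : |dinv p| ≤ 1 := by
  unfold dinv
  split_ifs with h
  · have h' : (3:ℝ) ≤ deg p := by exact_mod_cast h
    have : (1:ℝ) ≤ (deg p : ℝ) ^ 2 + deg p - 6 := by nlinarith
    rw [abs_neg, abs_of_pos (by positivity)]
    rw [div_le_one (by positivity)]; exact this
  · simp

lemma dinv_abs2 (p : Idx) : |dinv p| * (deg p : ℝ) ^ 2 ≤ 3 / 2 := by
  unfold dinv
  split_ifs with h
  · have h' : (3:ℝ) ≤ deg p := by exact_mod_cast h
    have : (0:ℝ) < (deg p : ℝ) ^ 2 + deg p - 6 := by nlinarith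
    rw [abs_neg, abs_of_pos (by positivity), one_div, inv_mul_le_iff₀ this]
    nlinarith
  · simp; norm_num

def Dinv : L1 →L[ℝ] L1 := lift (fun p => dinv p • bas p) 1
  (fun p => by rw [norm_smul, norm_bas, mul_one]; exact dinv_abs p)

lemma BB_bound (p : Idx) : ‖dinv p • Rv p‖ ≤ 1 / 2 := by
  rw [norm_smul, Real.norm_eq_abs]
  have h1 := mul_le_mul_of_nonneg_left (Rv_norm p) (abs_nonneg (dinv p))
  have h2 := dinv_abs2 p
  refine h1.trans ?_
  calc _ = 2 * rr ^ 2 * (|dinv p| * (deg p : ℝ) ^ 2) := by ring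
    _ ≤ 2 * rr ^ 2 * (3 / 2) := mul_le_mul_of_nonneg_left h2 (by unfold rr; positivity)
    _ ≤ 1 / 2 := by norm_num [rr]

def BB : L1 →L[ℝ] L1 := lift (fun p => dinv p • Rv p) (1/2) BB_bound

lemma BB_norm : ‖BB‖ ≤ 1 / 2 :=
  ContinuousLinearMap.opNorm_le_bound _ (by norm_num)
    (fun u => clm_bound _ _ (fun k => by rw [BB, lift_bas]; exact BB_bound _) u)

lemma mono_abs (p : Idx) (θ φ : ℝ) : |mono p θ φ| ≤ 1 := by
  have := (Bd_mono p).2 0 (θ, φ)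
  simp at this
  exact this.trans (pow_le_one₀ rr_pos.le rr_lt.le)

def ev (θ φ : ℝ) : L1 →L[ℝ] ℝ := lift (fun p => mono p θ φ) 1 (fun p => mono_abs p θ φ)

lemma ev_eq (θ φ : ℝ) (u : L1) : ev θ φ u = ser mono u θ φ := by
  simp [ev, lift_apply, ser]

lemma ev_bas (θ φ : ℝ) (p : Idx) : ev θ φ (bas p) = mono p θ φ := by
  rw [ev, lift_bas]

lemma ev_mult (θ φ : ℝ) (u v w : L1) : ev θ φ (M3 u v w) = ev θ φ u * ev θ φ v * ev θ φ w := by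
  apply M3_mult
  intro i j k
  simp only [ev_bas, mono, add3, deg]
  ring

lemma mono_idx {a b : ℕ} (h : Odd (a + b)) (θ φ : ℝ) : mono (idx a b) θ φ =
    rr ^ (a + 2 * b) * (Real.cos θ ^ a * (Real.sin θ ^ 2 * Real.cos (2 * φ)) ^ b) := by
  rw [idx_of h]; rfl

lemma lapS_mono (p : Idx) (θ φ : ℝ) (hs : Real.sin θ ≠ 0) :
    lapS (mono p) θ φ = -((deg p : ℝ) * (deg p + 1)) * mono p θ φ + ev θ φ (Rv p) := by
  obtain ⟨⟨a, b⟩, h⟩ := p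
  replace h : Odd (a + b) := h
  have h1 := lapS_raw (rr ^ deg ⟨(a, b), h⟩) a b θ φ hs
  have h0 : lapS (mono ⟨(a, b), h⟩) θ φ = _ := h1
  rw [h0]
  simp only [Rv, map_add, map_sub, map_smul, ev_bas, smul_eq_mul]
  have e1 : (rr ^ 2 * (a * (a - 1)) : ℝ) * mono (idx (a - 2) b) θ φ =
    a * (a - 1) * (rr ^ (a + 2 * b) * (Real.cos θ ^ (a - 2) * (Real.sin θ ^ 2 * Real.cos (2 * φ)) ^ b)) := by
    rcases a with _ | _ | a
    · simp
    · simp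
    · rw [mono_idx (by rw [Nat.odd_iff] at h ⊢; omega)]
      rw [show ∀ n : ℕ, n + 1 + 1 - 2 = n from fun n => rfl]
      ring
  have e2 : (4 * (b * (b - 1)) : ℝ) * (rr ^ 4 * mono (idx a (b - 2)) θ φ - rr ^ 2 * mono (idx (a + 2) (b - 2)) θ φ) =
    4 * b * (b - 1) * (rr ^ (a + 2 * b)) * (Real.cos θ ^ a * (Real.sin θ ^ 2 * Real.cos (2 * φ)) ^ (b - 2)
          - Real.cos θ ^ (a + 2) * (Real.sin θ ^ 2 * Real.cos (2 * φ)) ^ (b - 2)) := by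
    rcases b with _ | _ | b
    · simp
    · simp
    · rw [mono_idx (by rw [Nat.odd_iff] at h ⊢; omega), mono_idx (by rw [Nat.odd_iff] at h ⊢; omega)]
      rw [show ∀ n : ℕ, n + 1 + 1 - 2 = n from fun n => rfl]
      ring
  rw [e1, e2]
  simp only [deg, mono]
  push_cast
  ring

lemma lap_bdd (θ φ : ℝ) : ∃ C, ∀ p, ‖lapS (mono p) θ φ‖ ≤ C := by
  obtain ⟨C1, h1⟩ := good_mono.dTheta.bound0
  obtain ⟨C2, h2⟩ := good_mono.dTheta.dTheta.bound0
  obtain ⟨C3, h3⟩ := good_mono.dPhi.dPhi.bound0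
  refine ⟨|1 / Real.sin θ| * (|Real.cos θ| * C1 + |Real.sin θ| * C2) + |1 / Real.sin θ ^ 2| * C3, fun p => ?_⟩
  rw [lapS_eq (good_mono.1 p)]
  refine (norm_add_le _ _).trans (add_le_add ?_ ?_)
  · rw [norm_mul]
    refine mul_le_mul_of_nonneg_left ?_ (abs_nonneg _)
    refine (norm_add_le _ _).trans (add_le_add ?_ ?_) <;> rw [norm_mul]
    · exact mul_le_mul_of_nonneg_left (h1 _ _ _) (abs_nonneg _)
    · exact mul_le_mul_of_nonneg_left (h2 _ _ _) (abs_nonneg _)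
  · rw [norm_mul]; exact mul_le_mul_of_nonneg_left (h3 _ _ _) (abs_nonneg _)

def LL (θ φ : ℝ) : L1 →L[ℝ] ℝ := lift (fun p => lapS (mono p) θ φ) (lap_bdd θ φ).choose (lap_bdd θ φ).choose_spec

lemma LL_eq (θ φ : ℝ) (u : L1) : lapS (ser mono u) θ φ = LL θ φ u := by
  rw [lapS_ser good_mono, LL, lift_apply]; simp

def p10 : Idx := ⟨(1, 0), by decide⟩
def p01 : Idx := ⟨(0, 1), by decide⟩

lemma deg_cases (p : Idx) (h : ¬ 3 ≤ deg p) : p = p10 ∨ p = p01 := by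
  obtain ⟨⟨a, b⟩, hp⟩ := p
  simp only [deg, not_le] at h
  simp only at hp
  have hb : b ≤ 1 := by omega
  have ha : a ≤ 2 := by omega
  interval_cases b <;> interval_cases a <;> simp_all [p10, p01] <;> revert hp <;> decide

lemma LL_Dinv (θ φ : ℝ) (hs : Real.sin θ ≠ 0) (h : L1) :
    LL θ φ (Dinv h) = -6 * ev θ φ (Dinv h) + ev θ φ h - mono p10 θ φ * coord p10 h
      - mono p01 θ φ * coord p01 h + ev θ φ (BB h) := by
  have key : LL θ φ ∘L Dinv = (-6:ℝ) • (ev θ φ ∘L Dinv) + ev θ φ - mono p10 θ φ • coord p10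
      - mono p01 θ φ • coord p01 + ev θ φ ∘L BB := by
    apply clm_ext
    intro p
    simp only [ContinuousLinearMap.comp_apply, ContinuousLinearMap.add_apply, ContinuousLinearMap.sub_apply,
      ContinuousLinearMap.smul_apply, Dinv, BB, lift_bas, map_smul, ev_bas, coord_bas, smul_eq_mul]
    rw [LL, lift_bas, lapS_mono p θ φ hs]
    by_cases h3 : 3 ≤ deg p
    · have n1 : p ≠ p10 := by rintro rfl; revert h3; decide
      have n2 : p ≠ p01 := by rintro rfl; revert h3; decide
      simp only [n1, n2, if_false, dinv, h3, if_true]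
      have h' : (3:ℝ) ≤ deg p := by exact_mod_cast h3
      have : (deg p : ℝ) ^ 2 + deg p - 6 ≠ 0 := by nlinarith
      have hd : (deg p : ℝ) * (deg p + 1) = ((deg p : ℝ) ^ 2 + deg p - 6) + 6 := by ring
      rw [hd]
      generalize (deg p : ℝ) ^ 2 + deg p - 6 = D at *
      field_simp
      ring
    · have : dinv p = 0 := by simp [dinv, h3]
      rw [this]
      rcases deg_cases p h3 with rfl | rfl
      · simp [p10, p01]
      · simp [p10, p01]
  have := congrArg (fun T => T h) key
  simpa using this

lemma LL_p10 (θ φ : ℝ) (hs : Real.sin θ ≠ 0) : LL θ φ (bas p10) = -2 * mono p10 θ φ := by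
  rw [LL, lift_bas, lapS_mono _ _ _ hs]; simp [deg, p10, Rv]; norm_num
lemma LL_p01 (θ φ : ℝ) (hs : Real.sin θ ≠ 0) : LL θ φ (bas p01) = -6 * mono p01 θ φ := by
  rw [LL, lift_bas, lapS_mono _ _ _ hs]; simp [deg, p01, Rv]; norm_num


open Filter Topology

lemma one_add_BB_inv : ((1 : L1 →L[ℝ] L1) + BB).IsInvertible := by
  have h : ‖-BB‖ < 1 := by rw [norm_neg]; exact BB_norm.trans_lt (by norm_num)
  have h1 := isUnit_one_sub_of_norm_lt_one h
  rw [sub_neg_eq_add] at h1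
  obtain ⟨u, hu⟩ := h1
  exact ⟨ContinuousLinearEquiv.unitsEquiv ℝ L1 u, by rw [← hu]; rfl⟩

def psi0 (ε : ℝ) : L1 := bas p10 + ε • bas p01

def psi (ε : ℝ) (x : ℝ × L1) : L1 := psi0 ε + x.1 • Dinv x.2

def FF (ε : ℝ) (x : ℝ × L1) : L1 :=
  x.2 + BB x.2 - M3 (psi ε x) (psi ε x) (psi ε x) + (x.1 / ε * coord p01 x.2) • Dinv x.2

open scoped ContDiff in
lemma FF_contDiff (ε : ℝ) : ContDiff ℝ ∞ (FF ε) := by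
  unfold FF psi
  fun_prop

lemma FF_inr (ε : ℝ) (h0 : L1) : fderiv ℝ (FF ε) (0, h0) ∘L .inr ℝ ℝ L1 = 1 + BB := by
  have h1 : HasFDerivAt (FF ε) (fderiv ℝ (FF ε) (0, h0)) (0, h0) :=
    ((FF_contDiff ε).differentiable (by simp) _).hasFDerivAt
  have h2 : HasFDerivAt (fun h : L1 => ((0:ℝ), h)) (.inr ℝ ℝ L1) h0 :=
    (hasFDerivAt_const (0:ℝ) h0).prodMk (hasFDerivAt_id h0)
  have h3 := h1.comp h0 h2
  have h4 : (FF ε ∘ fun h : L1 => ((0:ℝ), h)) = fun h => (1 + BB) h - M3 (psi0 ε) (psi0 ε) (psi0 ε) := by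
    ext1 h
    simp [FF, psi]
  rw [h4] at h3
  have h5 : HasFDerivAt (fun h => (1 + BB) h - M3 (psi0 ε) (psi0 ε) (psi0 ε)) (1 + BB) h0 :=
    ((1 + BB).hasFDerivAt).sub_const _
  exact h3.unique h5

lemma FF_solve (ε : ℝ) (h0 : L1) (hh : h0 + BB h0 = M3 (psi0 ε) (psi0 ε) (psi0 ε)) :
    ∃ H : ℝ → L1, Tendsto H (𝓝 0) (𝓝 h0) ∧ ∀ᶠ δ in 𝓝 (0:ℝ), FF ε (δ, H δ) = 0 := by
  have hs : HasStrictFDerivAt (FF ε) (fderiv ℝ (FF ε) (0, h0)) (0, h0) :=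
    (FF_contDiff ε).contDiffAt.hasStrictFDerivAt (by simp)
  have hi : (fderiv ℝ (FF ε) (0, h0) ∘L .inr ℝ ℝ L1).IsInvertible := by
    rw [FF_inr]; exact one_add_BB_inv
  have h0' : FF ε (0, h0) = 0 := by
    simp [FF, psi, hh]
  refine ⟨hs.implicitFunctionOfProdDomain hi, hs.tendsto_implicitFunctionOfProdDomain hi, ?_⟩
  have := hs.eventually_apply_implicitFunctionOfProdDomain hi
  simpa [h0'] using this

def p30 : Idx := ⟨(3, 0), by decide⟩
def p21 : Idx := ⟨(2, 1), by decide⟩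
def p12 : Idx := ⟨(1, 2), by decide⟩
def p03 : Idx := ⟨(0, 3), by decide⟩

def hh21 (ε : ℝ) : ℝ := 3 * ε - 2 / 3 * rr ^ 2 * ε ^ 3
def hh30 (ε : ℝ) : ℝ := 1 - rr ^ 2 * ε ^ 2
def hz (ε : ℝ) : L1 := ε ^ 3 • bas p03 + (3 * ε ^ 2) • bas p12 + hh21 ε • bas p21 + hh30 ε • bas p30
  + (2 / 3 * rr ^ 4 * ε ^ 3 + rr ^ 2 / 7 * hh21 ε) • bas p01
  + (rr ^ 4 * ε ^ 2 + rr ^ 2 * hh30 ε) • bas p10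

lemma idx10 : idx 1 0 = p10 := by simp [idx, p10]
lemma idx01 : idx 0 1 = p01 := by simp [idx, p01]
lemma idx21 : idx 2 1 = p21 := idx_of (by decide)
lemma idx30 : idx 3 0 = p30 := idx_of (by decide)

lemma BB_p03 : BB (bas p03) = -(2 / 3 : ℝ) • (rr ^ 4 • bas p01 - rr ^ 2 • bas p21) := by
  rw [BB, lift_bas]; simp [dinv, Rv, p03, deg, idx01, idx21]; module
lemma BB_p12 : BB (bas p12) = -(1 / 3 : ℝ) • (rr ^ 4 • bas p10 - rr ^ 2 • bas p30) := by
  rw [BB, lift_bas]; simp [dinv, Rv, p12, deg, idx10, idx30]; module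
lemma BB_p21 : BB (bas p21) = -(rr ^ 2 / 7 : ℝ) • bas p01 := by
  rw [BB, lift_bas]; simp [dinv, Rv, p21, deg, idx01]; module
lemma BB_p30 : BB (bas p30) = -(rr ^ 2 : ℝ) • bas p10 := by
  rw [BB, lift_bas]; simp [dinv, Rv, p30, deg, idx10]; module
lemma BB_p10 : BB (bas p10) = 0 := by
  rw [BB, lift_bas]; simp [dinv, Rv, p10, deg]
lemma BB_p01 : BB (bas p01) = 0 := by
  rw [BB, lift_bas]; simp [dinv, Rv, p01, deg]

lemma hz_eq (ε : ℝ) : hz ε + BB (hz ε) = M3 (psi0 ε) (psi0 ε) (psi0 ε) := by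
  have a1 : add3 p10 p10 p10 = p30 := by decide
  have a2 : add3 p10 p10 p01 = p21 := by decide
  have a3 : add3 p10 p01 p10 = p21 := by decide
  have a4 : add3 p01 p10 p10 = p21 := by decide
  have a5 : add3 p10 p01 p01 = p12 := by decide
  have a6 : add3 p01 p10 p01 = p12 := by decide
  have a7 : add3 p01 p01 p10 = p12 := by decide
  have a8 : add3 p01 p01 p01 = p03 := by decide
  simp only [hz, psi0, map_add, map_smul, ContinuousLinearMap.add_apply, ContinuousLinearMap.smul_apply,
    M3_bas, a1, a2, a3, a4, a5, a6, a7, a8, BB_p03, BB_p12, BB_p21, BB_p30, BB_p10, BB_p01, hh21, hh30]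
  module

lemma solve (ε : ℝ) :
    ∃ H : ℝ → L1, Tendsto H (𝓝 0) (𝓝 (hz ε)) ∧ ∀ᶠ δ in 𝓝 (0:ℝ), FF ε (δ, H δ) = 0 :=
  FF_solve ε (hz ε) (hz_eq ε)

/-- the elliptic equation -/
lemma psi_lap (ε δ : ℝ) (hε : ε ≠ 0) (h : L1) (hF : FF ε (δ, h) = 0) (θ φ : ℝ) (hs : Real.sin θ ≠ 0) :
    lapS (ser mono (psi ε (δ, h))) θ φ = -6 * ev θ φ (psi ε (δ, h))
      + (4 - δ * coord p10 h + δ * (coord p01 h / ε)) * (rr * Real.cos θ)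
      + δ * (ev θ φ (psi ε (δ, h))) ^ 3 - δ * (coord p01 h / ε) * ev θ φ (psi ε (δ, h)) := by
  have h1 := congrArg (ev θ φ) hF
  rw [LL_eq]
  simp only [FF, map_add, map_sub, map_smul, ev_mult, smul_eq_mul, map_zero] at h1
  have h2 : LL θ φ (psi ε (δ, h)) = LL θ φ (bas p10) + ε * LL θ φ (bas p01) + δ * LL θ φ (Dinv h) := by
    simp [psi, psi0]
  have h3 : ev θ φ (psi ε (δ, h)) = mono p10 θ φ + ε * mono p01 θ φ + δ * ev θ φ (Dinv h) := by
    simp [psi, psi0, ev_bas]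
  rw [h2, LL_Dinv θ φ hs, LL_p10 θ φ hs, LL_p01 θ φ hs]
  have h4 : mono p10 θ φ = rr * Real.cos θ := by simp [mono, p10, deg]
  generalize ev θ φ (psi ε (δ, h)) = P at *
  rw [← h4]
  have h5 : ev θ φ h + ev θ φ (BB h) = P * P * P - δ / ε * coord p01 h * ev θ φ (Dinv h) := by linarith
  subst h3
  field_simp at h5 ⊢
  linear_combination δ * h5


open Polynomial in
def DP (n k : ℕ) : ℝ[X] := derivative^[k] ((X ^ 2 - 1) ^ n)

open Polynomial in
lemma iterDeriv_poly (p : ℝ[X]) (k : ℕ) : iteratedDeriv k (fun x => p.eval x) = fun x => (derivative^[k] p).eval x := by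
  induction k with
  | zero => simp
  | succ k ih =>
    rw [iteratedDeriv_succ, ih, Function.iterate_succ_apply']
    ext x
    simp

lemma legP_eq (n : ℕ) : legP n = fun s => (1 / ((2:ℝ)^n * (Nat.factorial n : ℝ))) * (DP n n).eval s := by
  ext s
  unfold legP DP
  have := congrFun (iterDeriv_poly (((Polynomial.X:Polynomial ℝ) ^ 2 - 1) ^ n) n) s
  rw [← this]
  simp

open Polynomial in
lemma iter_legP (n m : ℕ) : iteratedDeriv m (legP n) = fun s => (1 / ((2:ℝ)^n * (Nat.factorial n : ℝ))) * (DP n (n + m)).eval s := by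
  have : legP n = fun s => (C (1 / ((2:ℝ)^n * (Nat.factorial n : ℝ))) * DP n n).eval s := by
    rw [legP_eq]; ext s; simp
  rw [this, iterDeriv_poly, iterate_derivative_C_mul]
  ext s
  simp only [eval_mul, eval_C, DP]
  rw [← Function.iterate_add_apply, add_comm m n]

def trg (m : ℤ) (φ : ℝ) : ℝ :=
  if m = 0 then 1 else if 0 < m then Real.cos ((m.natAbs : ℝ) * φ) else Real.sin ((m.natAbs : ℝ) * φ)

def Kc (n : ℕ) (m : ℤ) : ℝ :=
  (if m = 0 then 1 else Real.sqrt 2) * Real.sqrt ((2*(n:ℝ)+1)/(4*Real.pi) *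
        ((Nat.factorial (n - m.natAbs) : ℝ) / (Nat.factorial (n + m.natAbs) : ℝ))) *
    (1 / ((2:ℝ)^n * (Nat.factorial n : ℝ)))

lemma neg_one_sq_pow (k : ℕ) : (-1:ℝ) ^ k * (-1) ^ k = 1 := by
  rw [← mul_pow]; simp

lemma Ynm_form (n : ℕ) (m : ℤ) (θ φ : ℝ) : Ynm n m θ φ =
    Kc n m * (Real.sin θ ^ 2) ^ ((m.natAbs : ℝ)/2) * (DP n (n + m.natAbs)).eval (Real.cos θ) * trg m φ := by
  have hs : 1 - Real.cos θ ^ 2 = Real.sin θ ^ 2 := by linarith [Real.sin_sq_add_cos_sq θ]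
  unfold Ynm Kc trg assocLegP
  rw [iter_legP, hs]
  rcases eq_or_ne m 0 with rfl | h0
  · have hn : (Nat.factorial n : ℝ) ≠ 0 := by positivity
    simp [legP_eq, hn]; ring
  · simp only [h0, if_false]
    split_ifs
    · linear_combination (Real.sqrt 2 *
      Real.sqrt ((2*(n:ℝ)+1)/(4*Real.pi) *
        ((Nat.factorial (n - m.natAbs) : ℝ) / (Nat.factorial (n + m.natAbs) : ℝ))) * (Real.sin θ ^ 2) ^ ((m.natAbs : ℝ)/2) *
        ((1 / ((2:ℝ)^n * (Nat.factorial n : ℝ))) * (DP n (n + m.natAbs)).eval (Real.cos θ)) * Real.cos ((m.natAbs : ℝ) * φ)) * neg_one_sq_pow m.natAbs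
    · linear_combination (Real.sqrt 2 *
      Real.sqrt ((2*(n:ℝ)+1)/(4*Real.pi) *
        ((Nat.factorial (n - m.natAbs) : ℝ) / (Nat.factorial (n + m.natAbs) : ℝ))) * (Real.sin θ ^ 2) ^ ((m.natAbs : ℝ)/2) *
        ((1 / ((2:ℝ)^n * (Nat.factorial n : ℝ))) * (DP n (n + m.natAbs)).eval (Real.cos θ)) * Real.sin ((m.natAbs : ℝ) * φ)) * neg_one_sq_pow m.natAbs

lemma trg_abs (m : ℤ) (φ : ℝ) : |trg m φ| ≤ 1 := by
  unfold trg; split_ifs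
  · simp
  · exact Real.abs_cos_le_one _
  · exact Real.abs_sin_le_one _

lemma trg_cont (m : ℤ) : Continuous (trg m) := by
  unfold trg; split_ifs <;> fun_prop

lemma Ynm_cont (n : ℕ) (m : ℤ) : Continuous (Function.uncurry (Ynm n m)) := by
  have : Function.uncurry (Ynm n m) = fun x : ℝ × ℝ => Kc n m * (Real.sin x.1 ^ 2) ^ ((m.natAbs : ℝ)/2) * (DP n (n + m.natAbs)).eval (Real.cos x.1) * trg m x.2 := by
    ext ⟨a, b⟩; exact Ynm_form n m a b
  rw [this]
  have h1 : Continuous fun x : ℝ × ℝ => (Real.sin x.1 ^ 2) ^ ((m.natAbs : ℝ)/2) :=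
    Continuous.rpow_const (by fun_prop) (fun x => Or.inr (by positivity))
  have h2 : Continuous fun x : ℝ × ℝ => trg m x.2 := (trg_cont m).comp continuous_snd
  have h3 : Continuous fun x : ℝ × ℝ => (DP n (n + m.natAbs)).eval (Real.cos x.1) :=
    (Polynomial.continuous _).comp (by fun_prop)
  exact ((continuous_const.mul h1).mul h3).mul h2

open Polynomial in
lemma DP_bound (n k : ℕ) (x : ℝ) (hx : |x| ≤ 1) : |(DP n k).eval x| ≤ 8 ^ n * (Nat.factorial k : ℝ) := by
  have h1 : ((X:ℝ[X]) ^ 2 - 1) ^ n = ∑ j ∈ Finset.range (n+1), C (((-1:ℝ)) ^ (n - j) * (n.choose j)) * X ^ (2 * j) := by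
    rw [sub_eq_add_neg, add_pow]
    refine Finset.sum_congr rfl fun j _ => ?_
    simp only [map_mul, map_pow, map_neg, map_one, map_natCast, pow_mul]
    ring
  unfold DP
  rw [h1, iterate_derivative_sum, eval_finset_sum]
  refine (Finset.abs_sum_le_sum_abs _ _).trans ?_
  have h2 : ∀ j ∈ Finset.range (n+1), |(derivative^[k] (C (((-1:ℝ)) ^ (n - j) * (n.choose j)) * X ^ (2 * j))).eval x|
      ≤ (n.choose j : ℝ) * (4 ^ n * (Nat.factorial k : ℝ)) := by
    intro j hj
    have hj' : j ≤ n := by simpa [Nat.lt_succ_iff] using hj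
    rw [iterate_derivative_C_mul, iterate_derivative_X_pow_eq_C_mul]
    simp only [eval_mul, eval_C, eval_pow, eval_X, abs_mul, abs_pow, abs_neg, abs_one, one_pow, one_mul, Nat.abs_cast]
    refine mul_le_mul_of_nonneg_left ?_ (by positivity)
    have h3 : ((2 * j).descFactorial k : ℝ) ≤ 4 ^ n * (Nat.factorial k : ℝ) := by
      rw [Nat.descFactorial_eq_factorial_mul_choose]
      have : (2 * j).choose k ≤ 4 ^ n := by
        calc (2 * j).choose k ≤ 2 ^ (2 * j) := Nat.choose_le_two_pow _ _
          _ ≤ 2 ^ (2 * n) := Nat.pow_le_pow_right (by norm_num) (by omega)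
          _ = 4 ^ n := by rw [pow_mul]; norm_num
      have h' : ((2 * j).choose k : ℝ) ≤ 4 ^ n := by exact_mod_cast this
      push_cast
      rw [mul_comm]
      exact mul_le_mul_of_nonneg_right h' (by positivity)
    have h4 : |x| ^ (2 * j - k) ≤ 1 := pow_le_one₀ (abs_nonneg _) hx
    calc _ ≤ ((2 * j).descFactorial k : ℝ) * 1 := mul_le_mul_of_nonneg_left h4 (by positivity)
      _ ≤ _ := by rw [mul_one]; exact h3
  refine (Finset.sum_le_sum h2).trans ?_
  rw [← Finset.sum_mul]
  have : ∑ i ∈ Finset.range (n+1), (n.choose i : ℝ) = 2 ^ n := by exact_mod_cast Nat.sum_range_choose n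
  rw [this, show (8:ℝ) = 2 * 4 by norm_num, mul_pow]
  exact le_of_eq (by ring)

lemma Kc_bound (n : ℕ) (m : ℤ) (hm : m.natAbs ≤ n) (x : ℝ) (hx : |x| ≤ 1) :
    |Kc n m * (DP n (n + m.natAbs)).eval x| ≤ 16 ^ n := by
  set k := m.natAbs with hk
  have hD := DP_bound n (n + k) x hx
  rw [abs_mul]
  have hK0 : 0 ≤ Kc n m := by unfold Kc; split_ifs <;> positivity
  rw [abs_of_nonneg hK0]
  refine (mul_le_mul_of_nonneg_left hD hK0).trans ?_
  refine abs_le_of_sq_le_sq' (b := (16:ℝ) ^ n) ?_ (by positivity) |>.2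
  have hq : (Kc n m) ^ 2 ≤ 2 * ((2*(n:ℝ)+1)/(4*Real.pi) *
        ((Nat.factorial (n - k) : ℝ) / (Nat.factorial (n + k) : ℝ))) *
    (1 / ((2:ℝ)^n * (Nat.factorial n : ℝ))) ^ 2 := by
    unfold Kc
    rw [mul_pow, mul_pow, Real.sq_sqrt (by positivity)]
    refine mul_le_mul_of_nonneg_right (mul_le_mul_of_nonneg_right ?_ (by positivity)) (by positivity)
    split_ifs
    · norm_num
    · rw [Real.sq_sqrt (by norm_num)]
  have hf : ((Nat.factorial (n - k) : ℝ) * Nat.factorial (n + k)) ≤ 4 ^ n * (Nat.factorial n : ℝ) ^ 2 := by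
    have h1 : Nat.factorial (n - k) * Nat.factorial (n + k) ≤ Nat.factorial (2 * n) := by
      have := Nat.factorial_mul_factorial_dvd_factorial_add (n - k) (n + k)
      rw [show n - k + (n + k) = 2 * n by omega] at this
      exact Nat.le_of_dvd (Nat.factorial_pos _) this
    have h2 : Nat.factorial (2 * n) ≤ 4 ^ n * Nat.factorial n ^ 2 := by
      have h3 := Nat.choose_mul_factorial_mul_factorial (show n ≤ 2 * n by omega)
      have h4 : (2 * n).choose n ≤ 2 ^ (2 * n) := Nat.choose_le_two_pow _ _
      rw [pow_mul] at h4
      rw [← h3, show 2 * n - n = n by omega, mul_assoc, pow_two]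
      exact Nat.mul_le_mul_right _ h4
    exact_mod_cast h1.trans h2
  have hn : 2 * (n:ℝ) + 1 ≤ 4 ^ n := by
    have := one_add_mul_le_pow (show (-2:ℝ) ≤ 3 by norm_num) n
    norm_num at this
    linarith [(Nat.cast_nonneg n : (0:ℝ) ≤ n)]
  have hpi := Real.pi_gt_three
  have f1 : (0:ℝ) < Nat.factorial (n + k) := by positivity
  have f2 : (0:ℝ) < Nat.factorial n := by positivity
  rw [mul_pow]
  calc _ ≤ 2 * ((2*(n:ℝ)+1)/(4*Real.pi) *
        ((Nat.factorial (n - k) : ℝ) / (Nat.factorial (n + k) : ℝ))) *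
    (1 / ((2:ℝ)^n * (Nat.factorial n : ℝ))) ^ 2 * (8 ^ n * (Nat.factorial (n + k) : ℝ)) ^ 2 :=
        mul_le_mul_of_nonneg_right hq (by positivity)
    _ = (2*(n:ℝ)+1) / (2 * Real.pi) * (8 ^ n / 2 ^ n) ^ 2 * (((Nat.factorial (n - k) : ℝ) * Nat.factorial (n + k)) / (Nat.factorial n : ℝ) ^ 2) := by
        field_simp; norm_num
    _ ≤ 4 ^ n * (4 ^ n) ^ 2 * 4 ^ n := by
        refine mul_le_mul (mul_le_mul ?_ ?_ (by positivity) (by positivity)) ?_ (by positivity) (by positivity)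
        · rw [div_le_iff₀ (by positivity)]
          have : (0:ℝ) < 4 ^ n := by positivity
          nlinarith
        · rw [← div_pow]; norm_num
        · rw [div_le_iff₀ (by positivity)]; exact hf
    _ = (16 ^ n) ^ 2 := by
        rw [show (16:ℝ) = 4 * 4 by norm_num, mul_pow]; ring

lemma Ynm_bound (n : ℕ) (m : ℤ) (hm : m.natAbs ≤ n) (θ φ : ℝ) : |Ynm n m θ φ| ≤ 16 ^ n := by
  rw [Ynm_form]
  have h1 := Kc_bound n m hm _ (Real.abs_cos_le_one θ)
  have h2 : |(Real.sin θ ^ 2) ^ ((m.natAbs : ℝ)/2)| ≤ 1 := by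
    rw [abs_of_nonneg (by positivity)]
    exact Real.rpow_le_one (by positivity) (Real.sin_sq_le_one θ) (by positivity)
  have h3 := trg_abs m φ
  calc _ = |Kc n m * (DP n (n + m.natAbs)).eval (Real.cos θ)| * |(Real.sin θ ^ 2) ^ ((m.natAbs : ℝ)/2)| * |trg m φ| := by
        rw [← abs_mul, ← abs_mul]; congr 1; ring
    _ ≤ 16 ^ n * 1 * 1 := by gcongr
    _ = _ := by ring


section JJ
open Polynomial

def JJ (p : ℝ[X]) : ℝ := ∫ θ in (0:ℝ)..Real.pi, p.eval (Real.cos θ) * Real.sin θ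

lemma poly_cos_cont (p : ℝ[X]) : Continuous fun θ => p.eval (Real.cos θ) :=
  p.continuous.comp Real.continuous_cos

lemma pcs_cont (p : ℝ[X]) : Continuous fun θ => p.eval (Real.cos θ) * Real.sin θ :=
  (poly_cos_cont p).mul Real.continuous_sin

lemma JJ_add (p q : ℝ[X]) : JJ (p + q) = JJ p + JJ q := by
  unfold JJ
  rw [← intervalIntegral.integral_add ((pcs_cont p).intervalIntegrable _ _)
    ((pcs_cont q).intervalIntegrable _ _)]
  congr 1; ext θ; simp; ring

lemma JJ_deriv (p : ℝ[X]) : JJ (derivative p) = p.eval 1 - p.eval (-1) := by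
  unfold JJ
  have h : ∀ θ ∈ Set.uIcc (0:ℝ) Real.pi, HasDerivAt (fun θ => -(p.eval (Real.cos θ)))
      ((derivative p).eval (Real.cos θ) * Real.sin θ) θ := by
    intro θ _
    have := ((p.hasDerivAt (Real.cos θ)).comp θ (Real.hasDerivAt_cos θ)).neg
    exact this.congr_deriv (by ring)
  rw [intervalIntegral.integral_eq_sub_of_hasDerivAt h
    ((pcs_cont _).intervalIntegrable _ _)]
  simp; ring

lemma JJ_parts (A B : ℝ[X]) (h1 : (A * B).eval 1 = 0) (h2 : (A * B).eval (-1) = 0) :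
    JJ (A * derivative B) = - JJ (derivative A * B) := by
  have h := JJ_deriv (A * B)
  rw [derivative_mul, JJ_add, h1, h2] at h
  linarith

lemma eval_zero_of_dvd {p : ℝ[X]} {k : ℕ} (hk : 0 < k) (h : (X ^ 2 - 1 : ℝ[X]) ^ k ∣ p) :
    p.eval 1 = 0 ∧ p.eval (-1) = 0 := by
  obtain ⟨q, rfl⟩ := h
  have : k ≠ 0 := hk.ne'
  constructor <;> simp [this]

lemma JJ_iter (A : ℝ[X]) (n k : ℕ) (hA : (X ^ 2 - 1 : ℝ[X]) ^ k ∣ A) (i : ℕ) (hi : i ≤ n + k) :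
    JJ (A * DP n (n + k)) = (-1) ^ i * JJ (derivative^[i] A * DP n (n + k - i)) := by
  induction i with
  | zero => simp
  | succ i ih =>
    rw [ih (by omega)]
    obtain ⟨j, hj⟩ : ∃ j, n + k - i = j + 1 := ⟨n + k - i - 1, by omega⟩
    have hj' : n + k - (i + 1) = j := by omega
    rw [hj, hj']
    have e : DP n (j + 1) = derivative (DP n j) := by
      unfold DP; rw [Function.iterate_succ_apply']
    have hz : (derivative^[i] A * DP n j).eval 1 = 0 ∧ (derivative^[i] A * DP n j).eval (-1) = 0 := by
      by_cases hc : j < n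
      · have := pow_sub_dvd_iterate_derivative_of_pow_dvd j (dvd_refl ((X ^ 2 - 1 : ℝ[X]) ^ n))
        have := eval_zero_of_dvd (by omega) this
        unfold DP
        simp only [eval_mul, this.1, this.2]; simp
      · have := pow_sub_dvd_iterate_derivative_of_pow_dvd i hA
        have := eval_zero_of_dvd (by omega) this
        simp only [eval_mul, this.1, this.2]; simp
    rw [e, JJ_parts _ _ hz.1 hz.2, Function.iterate_succ_apply', pow_succ]
    ring

lemma JJ_orth (A : ℝ[X]) (n k : ℕ) (hA : (X ^ 2 - 1 : ℝ[X]) ^ k ∣ A) (hd : A.natDegree < n + k) :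
    JJ (A * DP n (n + k)) = 0 := by
  rw [JJ_iter A n k hA (n + k) le_rfl, iterate_derivative_eq_zero hd]
  simp [JJ]

end JJ

lemma int_trig0 (m : ℤ) (hm : m ≠ 0) : (∫ φ in (0:ℝ)..(2*Real.pi), Real.cos (m * φ)) = 0 ∧
    (∫ φ in (0:ℝ)..(2*Real.pi), Real.sin (m * φ)) = 0 := by
  have hm' : (m:ℝ) ≠ 0 := by exact_mod_cast hm
  have h1 : (m:ℝ) * (2 * Real.pi) = 0 + m * (2 * Real.pi) := by ring
  constructor
  · rw [intervalIntegral.integral_comp_mul_left (fun x => Real.cos x) hm', integral_cos, h1]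
    have h2 : Real.sin (0 + m * (2 * Real.pi)) = 0 := by
      rw [Real.sin_add_int_mul_two_pi]; simp
    rw [h2]; simp
  · rw [intervalIntegral.integral_comp_mul_left (fun x => Real.sin x) hm', integral_sin, h1,
      Real.cos_add_int_mul_two_pi]; simp

lemma int_trig (b : ℕ) : ∀ m : ℤ, (Odd m ∨ 2 * (b:ℤ) < m) →
    (∫ φ in (0:ℝ)..(2*Real.pi), Real.cos (2 * φ) ^ b * Real.cos (m * φ)) = 0 ∧
    (∫ φ in (0:ℝ)..(2*Real.pi), Real.cos (2 * φ) ^ b * Real.sin (m * φ)) = 0 := by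
  induction b with
  | zero =>
    intro m hm
    have : m ≠ 0 := by
      rintro rfl
      rcases hm with h | h
      · revert h; decide
      · simp at h
    simpa using int_trig0 m this
  | succ b ih =>
    intro m hm
    have h1 := ih (m + 2) (by
      rcases hm with h | h
      · left; exact h.add_even (by decide)
      · right; push_cast at h; omega)
    have h2 := ih (m - 2) (by
      rcases hm with h | h
      · left; exact h.sub_even (by decide)
      · right; push_cast at h; omega)
    constructor
    · have e : ∀ φ : ℝ, Real.cos (2 * φ) ^ (b+1) * Real.cos (m * φ) =
        (1/2) * (Real.cos (2 * φ) ^ b * Real.cos (((m + 2 : ℤ):ℝ) * φ) + Real.cos (2 * φ) ^ b * Real.cos (((m - 2 : ℤ):ℝ) * φ)) := by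
        intro φ
        push_cast
        rw [add_mul, sub_mul, Real.cos_add, Real.cos_sub]; ring
      simp only [e]
      rw [intervalIntegral.integral_const_mul, intervalIntegral.integral_add
        (Continuous.intervalIntegrable (by fun_prop) _ _) (Continuous.intervalIntegrable (by fun_prop) _ _), h1.1, h2.1]
      simp
    · have e : ∀ φ : ℝ, Real.cos (2 * φ) ^ (b+1) * Real.sin (m * φ) =
        (1/2) * (Real.cos (2 * φ) ^ b * Real.sin (((m + 2 : ℤ):ℝ) * φ) + Real.cos (2 * φ) ^ b * Real.sin (((m - 2 : ℤ):ℝ) * φ)) := by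
        intro φ
        push_cast
        rw [add_mul, sub_mul, Real.sin_add, Real.sin_sub]; ring
      simp only [e]
      rw [intervalIntegral.integral_const_mul, intervalIntegral.integral_add
        (Continuous.intervalIntegrable (by fun_prop) _ _) (Continuous.intervalIntegrable (by fun_prop) _ _), h1.2, h2.2]
      simp

lemma int_trg (b : ℕ) (m : ℤ) (hm : Odd m.natAbs ∨ 2 * b < m.natAbs) :
    (∫ φ in (0:ℝ)..(2*Real.pi), Real.cos (2 * φ) ^ b * trg m φ) = 0 := by
  have h := int_trig b (m.natAbs : ℤ) (by
    rcases hm with h | h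
    · left; exact_mod_cast h
    · right; exact_mod_cast h)
  have h0 : m ≠ 0 := by
    rintro rfl
    rcases hm with h | h
    · revert h; decide
    · simp at h
  simp only [Int.cast_natCast] at h
  unfold trg
  simp only [h0, if_false]
  split_ifs
  · exact h.1
  · exact h.2

/-- theta factor -/
def TI (p : Idx) (n : ℕ) (m : ℤ) : ℝ := ∫ θ in (0:ℝ)..Real.pi,
  Real.cos θ ^ p.1.1 * (Real.sin θ ^ 2) ^ p.1.2 * (Real.sin θ ^ 2) ^ ((m.natAbs : ℝ)/2)
    * (DP n (n + m.natAbs)).eval (Real.cos θ) * Real.sin θ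

lemma coeff_mono (p : Idx) (n : ℕ) (m : ℤ) : coeff (mono p) n m =
    rr ^ deg p * Kc n m * TI p n m * (∫ φ in (0:ℝ)..(2*Real.pi), Real.cos (2 * φ) ^ p.1.2 * trg m φ) := by
  unfold coeff sInner
  rw [← intervalIntegral.integral_const_mul]
  congr 1; ext φ
  unfold TI
  rw [mul_assoc, mul_comm (intervalIntegral _ _ _ _) (Real.cos (2 * φ) ^ p.1.2 * trg m φ), ← mul_assoc, ← intervalIntegral.integral_const_mul]
  congr 1; ext θ
  rw [Ynm_form, mono, mul_pow]
  ring

open Polynomial in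
lemma TI_even (p : Idx) (n : ℕ) (m : ℤ) (j : ℕ) (hj : m.natAbs = 2 * j) :
    TI p n m = JJ ((X ^ p.1.1 * (1 - X ^ 2) ^ (p.1.2 + j)) * DP n (n + m.natAbs)) := by
  unfold TI JJ
  congr 1; ext θ
  have h : ((m.natAbs : ℝ)/2) = (j : ℝ) := by rw [hj]; push_cast; ring
  rw [h, Real.rpow_natCast]
  have hs : 1 - Real.cos θ ^ 2 = Real.sin θ ^ 2 := by linarith [Real.sin_sq_add_cos_sq θ]
  simp only [eval_mul, eval_pow, eval_X, eval_sub, eval_one, hs]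
  ring

open Polynomial in
lemma coeff_mono_zero (p : Idx) (n : ℕ) (m : ℤ) (h : deg p < n) : coeff (mono p) n m = 0 := by
  rw [coeff_mono]
  by_cases hm : Odd m.natAbs ∨ 2 * p.1.2 < m.natAbs
  · rw [int_trg _ _ hm, mul_zero]
  · push Not at hm
    obtain ⟨h1, h2⟩ := hm
    obtain ⟨j, hj⟩ := (Nat.not_odd_iff_even.mp h1)
    have : TI p n m = 0 := by
      rw [TI_even p n m j (by omega)]
      apply JJ_orth
      · have : ((1:ℝ[X]) - X ^ 2) ^ (p.1.2 + j) = (-1) ^ (p.1.2 + j) * (X ^ 2 - 1) ^ (p.1.2 + j) := by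
          rw [← mul_pow]; congr 1; ring
        rw [this]
        exact ((pow_dvd_pow _ (by omega)).mul_left _).mul_left _
      · have : ((X:ℝ[X]) ^ p.1.1 * (1 - X ^ 2) ^ (p.1.2 + j)).natDegree ≤ p.1.1 + (p.1.2 + j) * 2 := by
          compute_degree
        unfold deg at h
        omega
    rw [this]; simp

/-- the coefficient functional -/
lemma sI_c1 (w Y : SphereFun) (hw : Continuous (Function.uncurry w)) (hY : Continuous (Function.uncurry Y)) :
    Continuous (fun x : ℝ × ℝ => w x.2 x.1 * Y x.2 x.1 * Real.sin x.2) := by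
  have a1 : Continuous (fun x : ℝ × ℝ => w x.2 x.1) := hw.comp continuous_swap
  have a2 : Continuous (fun x : ℝ × ℝ => Y x.2 x.1) := hY.comp continuous_swap
  have a3 : Continuous (fun x : ℝ × ℝ => Real.sin x.2) := Real.continuous_sin.comp continuous_snd
  exact (a1.mul a2).mul a3

lemma sI_c2 (w Y : SphereFun) (hw : Continuous (Function.uncurry w)) (hY : Continuous (Function.uncurry Y)) (φ : ℝ) :
    Continuous (fun θ => w θ φ * Y θ φ * Real.sin θ) :=
  (sI_c1 w Y hw hY).comp (Continuous.prodMk_right φ)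

lemma sI_c3 (w Y : SphereFun) (hw : Continuous (Function.uncurry w)) (hY : Continuous (Function.uncurry Y)) :
    Continuous (fun φ => ∫ θ in (0:ℝ)..Real.pi, w θ φ * Y θ φ * Real.sin θ) :=
  intervalIntegral.continuous_parametric_intervalIntegral_of_continuous' (sI_c1 w Y hw hY) _ _

lemma sInner_add {u v Y : SphereFun} (hu : Continuous (Function.uncurry u)) (hv : Continuous (Function.uncurry v))
    (hY : Continuous (Function.uncurry Y)) :
    sInner (fun θ φ => u θ φ + v θ φ) Y = sInner u Y + sInner v Y := by
  unfold sInner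
  rw [← intervalIntegral.integral_add ((sI_c3 u Y hu hY).intervalIntegrable _ _) ((sI_c3 v Y hv hY).intervalIntegrable _ _)]
  congr 1; ext φ
  rw [← intervalIntegral.integral_add ((sI_c2 u Y hu hY φ).intervalIntegrable _ _) ((sI_c2 v Y hv hY φ).intervalIntegrable _ _)]
  congr 1; ext θ; ring

lemma coeff_add {u v : SphereFun} (hu : Continuous (Function.uncurry u)) (hv : Continuous (Function.uncurry v)) (n : ℕ) (m : ℤ) :
    coeff (fun θ φ => u θ φ + v θ φ) n m = coeff u n m + coeff v n m :=
  sInner_add hu hv (Ynm_cont n m)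

lemma coeff_smul (c : ℝ) (u : SphereFun) (n : ℕ) (m : ℤ) :
    coeff (fun θ φ => c * u θ φ) n m = c * coeff u n m := by
  unfold coeff sInner
  rw [← intervalIntegral.integral_const_mul]
  congr 1; ext φ
  rw [← intervalIntegral.integral_const_mul]
  congr 1; ext θ; ring

lemma coeff_le (u : SphereFun) (C D : ℝ) (n : ℕ) (m : ℤ) (hu : ∀ θ φ, |u θ φ| ≤ C) (hY : ∀ θ φ, |Ynm n m θ φ| ≤ D) :
    |coeff u n m| ≤ 20 * (C * D) := by
  have hC : 0 ≤ C := (abs_nonneg _).trans (hu 0 0)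
  have hD : 0 ≤ D := (abs_nonneg _).trans (hY 0 0)
  unfold coeff sInner
  have h1 : ∀ φ, ‖∫ θ in (0:ℝ)..Real.pi, u θ φ * Ynm n m θ φ * Real.sin θ‖ ≤ (C * D) * |Real.pi - 0| := by
    intro φ
    apply intervalIntegral.norm_integral_le_of_norm_le_const
    intro θ _
    rw [norm_mul, norm_mul]
    calc _ ≤ C * D * 1 := mul_le_mul (mul_le_mul (hu _ _) (hY _ _) (abs_nonneg _) hC) (Real.abs_sin_le_one _) (abs_nonneg _) (by positivity)
      _ = _ := by ring
  have h2 := intervalIntegral.norm_integral_le_of_norm_le_const (a := 0) (b := 2 * Real.pi) (fun φ _ => h1 φ)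
  rw [Real.norm_eq_abs] at h2
  refine h2.trans ?_
  rw [sub_zero, sub_zero, abs_of_pos Real.pi_pos, abs_of_pos (by positivity)]
  have hp : Real.pi * (2 * Real.pi) ≤ 20 := by nlinarith [Real.pi_lt_d2, Real.pi_pos]
  calc C * D * Real.pi * (2 * Real.pi) = C * D * (Real.pi * (2 * Real.pi)) := by ring
    _ ≤ C * D * 20 := mul_le_mul_of_nonneg_left hp (by positivity)
    _ = _ := by ring

lemma ser_cont (u : L1) : Continuous (Function.uncurry (ser mono u)) := (good_mono.smooth u).continuous

lemma ser_abs (u : L1) (θ φ : ℝ) : |ser mono u θ φ| ≤ ‖u‖ := by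
  rw [← ev_eq]
  have := clm_bound (ev θ φ) 1 (fun i => by rw [ev_bas]; exact mono_abs i θ φ) u
  simpa using this

def cf (n : ℕ) (m : ℤ) (hm : m.natAbs ≤ n) : L1 →L[ℝ] ℝ :=
  LinearMap.mkContinuous
    { toFun := fun u => coeff (ser mono u) n m
      map_add' := fun u v => by
        rw [← coeff_add (ser_cont u) (ser_cont v)]
        congr 1; ext θ φ; simp only [← ev_eq, map_add]
      map_smul' := fun c u => by
        rw [RingHom.id_apply, smul_eq_mul, ← coeff_smul]
        congr 1; ext θ φ; simp only [← ev_eq, map_smul, smul_eq_mul] } (20 * 16 ^ n)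
    (fun u => by
      have := coeff_le (ser mono u) ‖u‖ (16 ^ n) n m (ser_abs u) (Ynm_bound n m hm)
      refine this.trans (le_of_eq (by ring)))

lemma cf_apply (n : ℕ) (m : ℤ) (hm : m.natAbs ≤ n) (u : L1) : cf n m hm u = coeff (ser mono u) n m := rfl

lemma ser_bas (p : Idx) : ser mono (bas p) = mono p := by
  ext θ φ; rw [← ev_eq, ev_bas]

lemma mono_abs2 (p : Idx) (θ φ : ℝ) : |mono p θ φ| ≤ rr ^ deg p := by
  have := (Bd_mono p).2 0 (θ, φ)
  simpa using this

lemma coeff_ser_bound (n : ℕ) (m : ℤ) (hm : m.natAbs ≤ n) (u : L1) :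
    |coeff (ser mono u) n m| ≤ 20 * (16 * rr) ^ n * ‖u‖ := by
  rw [← cf_apply n m hm]
  refine clm_bound (cf n m hm) (20 * (16 * rr) ^ n) (fun p => ?_) u
  rw [cf_apply, ser_bas, Real.norm_eq_abs]
  have hr := rr_pos
  by_cases h : deg p < n
  · rw [coeff_mono_zero p n m h, abs_zero]; positivity
  · refine (coeff_le _ _ _ n m (mono_abs2 p) (Ynm_bound n m hm)).trans ?_
    have : rr ^ deg p ≤ rr ^ n := pow_le_pow_of_le_one rr_pos.le rr_lt.le (by omega)
    rw [mul_pow]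
    have h16 : (0:ℝ) < 16 ^ n := by positivity
    nlinarith


lemma gev_term (n : ℕ) (m : ℤ) (hn : 1 ≤ n) (hm : |m| ≤ (n:ℤ)) (u : L1) :
    (muSp n)^2 * Real.exp (2*(1/2)*Real.sqrt (muSp n)) * (coeff (ser mono u) n m)^2
      ≤ 1200 * ‖u‖ ^ 2 * ((1/4:ℝ) ^ n * (1/4) ^ m.natAbs) := by
  have hm' : m.natAbs ≤ n := by
    rw [Int.abs_eq_natAbs] at hm; exact_mod_cast hm
  have h1 := coeff_ser_bound n m hm' u
  have h2 : (coeff (ser mono u) n m)^2 ≤ 400 * (32/125000) ^ n * ‖u‖ ^ 2 := by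
    rw [← sq_abs]
    refine (pow_le_pow_left₀ (abs_nonneg _) h1 2).trans (le_of_eq ?_)
    rw [mul_pow, mul_pow, ← pow_mul, mul_comm n 2, pow_mul]
    norm_num [rr]
  have h3 : muSp n ≤ ((n:ℝ) + 1) ^ 2 := by unfold muSp; nlinarith [(Nat.cast_nonneg n : (0:ℝ) ≤ n)]
  have h0 : 0 ≤ muSp n := by unfold muSp; positivity
  have h4 : ((n:ℝ) + 1) ≤ 2 ^ n := by exact_mod_cast (Nat.lt_two_pow_self (n := n))
  have h5 : muSp n ^ 2 ≤ 16 ^ n := by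
    calc muSp n ^ 2 ≤ (((n:ℝ) + 1) ^ 2) ^ 2 := pow_le_pow_left₀ h0 h3 2
      _ ≤ ((2 ^ n) ^ 2) ^ 2 := by gcongr
      _ = 16 ^ n := by rw [← pow_mul, ← pow_mul, show n * (2 * 2) = 4 * n by ring, pow_mul]; norm_num
  have h6 : Real.exp (2*(1/2)*Real.sqrt (muSp n)) ≤ 3 * 3 ^ n := by
    have a1 : Real.sqrt (muSp n) ≤ n + 1 := by
      rw [Real.sqrt_le_left (by positivity)]; exact h3
    calc Real.exp (2*(1/2)*Real.sqrt (muSp n)) ≤ Real.exp ((n + 1 : ℕ) * 1) := by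
          apply Real.exp_le_exp.mpr; push_cast; linarith
      _ = Real.exp 1 ^ (n + 1) := by rw [Real.exp_nat_mul]
      _ ≤ 3 ^ (n + 1) := pow_le_pow_left₀ (Real.exp_pos _).le (by linarith [Real.exp_one_lt_d9]) _
      _ = _ := by ring
  calc _ ≤ 16 ^ n * (3 * 3 ^ n) * (400 * (32/125000) ^ n * ‖u‖ ^ 2) := by gcongr
    _ = 1200 * ‖u‖ ^ 2 * ((16 * 3 * (32/125000)) ^ n) := by rw [mul_pow, mul_pow]; ring
    _ ≤ 1200 * ‖u‖ ^ 2 * ((1/16) ^ n) := by gcongr; norm_num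
    _ = 1200 * ‖u‖ ^ 2 * ((1/4) ^ n * (1/4) ^ n) := by rw [← mul_pow]; norm_num
    _ ≤ _ := by
      refine mul_le_mul_of_nonneg_left (mul_le_mul_of_nonneg_left ?_ (by positivity)) (by positivity)
      exact pow_le_pow_of_le_one (by norm_num) (by norm_num) hm'

lemma gsum : Summable (fun p : ℕ × ℤ => (1/4:ℝ) ^ p.1 * (1/4) ^ p.2.natAbs) := by
  have h1 : Summable (fun n : ℕ => (1/4:ℝ) ^ n) := summable_geometric_of_lt_one (by norm_num) (by norm_num)
  have h2 : Summable (fun m : ℤ => (1/4:ℝ) ^ m.natAbs) := by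
    refine Summable.of_nat_of_neg ?_ ?_ <;> simpa using h1
  exact h1.mul_of_nonneg h2 (fun _ => by positivity) (fun _ => by positivity)

lemma gev_bound : ∃ C > 0, ∀ u : L1, gevNormSq (1/2) (ser mono u) ≤ ENNReal.ofReal ((C * ‖u‖) ^ 2) := by
  set S := ∑' p : ℕ × ℤ, (1/4:ℝ) ^ p.1 * (1/4) ^ p.2.natAbs with hS
  have hS0 : 0 ≤ S := tsum_nonneg fun _ => by positivity
  refine ⟨1200 * S + 1, by positivity, fun u => ?_⟩
  unfold gevNormSq
  calc _ ≤ ∑' p : ℕ × ℤ, ENNReal.ofReal (1200 * ‖u‖ ^ 2 * ((1/4:ℝ) ^ p.1 * (1/4) ^ p.2.natAbs)) := by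
        refine ENNReal.tsum_le_tsum fun p => ?_
        split_ifs with h
        · exact ENNReal.ofReal_le_ofReal (gev_term p.1 p.2 h.1 h.2 u)
        · exact zero_le
    _ = ENNReal.ofReal (1200 * ‖u‖ ^ 2 * S) := by
        rw [← ENNReal.ofReal_tsum_of_nonneg (fun _ => by positivity) (gsum.mul_left _), tsum_mul_left]
    _ ≤ _ := by
        apply ENNReal.ofReal_le_ofReal
        rw [mul_pow]
        have : 1200 * S ≤ (1200 * S + 1) ^ 2 := by nlinarith
        nlinarith [sq_nonneg ‖u‖]

section c42
open Polynomial

lemma DP46 : DP 4 6 = 20160 * X ^ 2 - 2880 := by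
  unfold DP
  have : ((X:ℝ[X]) ^ 2 - 1) ^ 4 = X ^ 8 - 4 * X ^ 6 + 6 * X ^ 4 - 4 * X ^ 2 + 1 := by ring
  rw [this]
  simp only [Function.iterate_succ, Function.iterate_zero, Function.comp_apply, id]
  simp
  simp only [map_ofNat]
  ring

lemma JJ_num (k : ℝ) (p : ℝ[X]) : JJ (C k * p) = k * JJ p := by
  unfold JJ
  rw [← intervalIntegral.integral_const_mul]
  congr 1; ext θ; simp; ring

lemma JJ_21 : JJ ((X ^ 2 * (1 - X ^ 2) ^ (1 + 1)) * DP 4 6) = 2880 * 64 / 315 := by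
  have h := JJ_deriv (2880 * (-105 * X ^ 3 + 567 * X ^ 5 - 675 * X ^ 7 + 245 * X ^ 9))
  have e : derivative (2880 * (-105 * X ^ 3 + 567 * X ^ 5 - 675 * X ^ 7 + 245 * X ^ 9) : ℝ[X]) =
      C 315 * ((X ^ 2 * (1 - X ^ 2) ^ (1 + 1)) * DP 4 6) := by
    rw [DP46]; simp; simp only [map_ofNat]; ring
  rw [e, JJ_num] at h
  simp at h
  norm_num at h
  linarith

lemma JJ_03 : JJ ((X ^ 0 * (1 - X ^ 2) ^ (3 + 1)) * DP 4 6) = - (2880 * 1024 / 3465) := by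
  have h := JJ_deriv (2880 * (-3465 * X + 12705 * X ^ 3 - 23562 * X ^ 5 + 22770 * X ^ 7 - 11165 * X ^ 9 + 2205 * X ^ 11))
  have e : derivative (2880 * (-3465 * X + 12705 * X ^ 3 - 23562 * X ^ 5 + 22770 * X ^ 7 - 11165 * X ^ 9 + 2205 * X ^ 11) : ℝ[X]) =
      C 3465 * ((X ^ 0 * (1 - X ^ 2) ^ (3 + 1)) * DP 4 6) := by
    rw [DP46]; simp; simp only [map_ofNat]; ring
  rw [e, JJ_num] at h
  simp at h
  norm_num at h
  norm_num
  linarith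

lemma JJ_12 : JJ ((X ^ 1 * (1 - X ^ 2) ^ (2 + 1)) * DP 4 6) = 0 := by
  have h := JJ_deriv (2880 * (-10 * X ^ 2 + 50 * X ^ 4 - 80 * X ^ 6 + 55 * X ^ 8 - 14 * X ^ 10))
  have e : derivative (2880 * (-10 * X ^ 2 + 50 * X ^ 4 - 80 * X ^ 6 + 55 * X ^ 8 - 14 * X ^ 10) : ℝ[X]) =
      C 20 * ((X ^ 1 * (1 - X ^ 2) ^ (2 + 1)) * DP 4 6) := by
    rw [DP46]; simp; simp only [map_ofNat]; ring
  rw [e, JJ_num] at h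
  simp at h
  norm_num at h ⊢
  linarith
end c42

lemma trg2 (φ : ℝ) : trg 2 φ = Real.cos (2 * φ) := by simp [trg]

lemma I2 : (∫ φ in (0:ℝ)..(2*Real.pi), Real.cos (2 * φ) ^ 1 * trg 2 φ) = Real.pi := by
  have h := (int_trig0 4 (by norm_num)).1
  have e : ∀ φ : ℝ, Real.cos (2 * φ) ^ 1 * trg 2 φ = 1/2 + 1/2 * Real.cos (((4:ℤ):ℝ) * φ) := by
    intro φ
    have : ((4:ℤ):ℝ) * φ = 2 * (2 * φ) := by push_cast; ring
    rw [this, Real.cos_two_mul (2 * φ), trg2]; ring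
  simp only [e]
  rw [intervalIntegral.integral_add (Continuous.intervalIntegrable (by fun_prop) _ _) (Continuous.intervalIntegrable (by fun_prop) _ _),
    intervalIntegral.integral_const_mul, h]
  simp; ring

lemma I4 : (∫ φ in (0:ℝ)..(2*Real.pi), Real.cos (2 * φ) ^ 3 * trg 2 φ) = 3 / 4 * Real.pi := by
  have h := (int_trig0 4 (by norm_num)).1
  have h' := (int_trig0 8 (by norm_num)).1
  have e : ∀ φ : ℝ, Real.cos (2 * φ) ^ 3 * trg 2 φ = 3/8 + (1/2 * Real.cos (((4:ℤ):ℝ) * φ) + 1/8 * Real.cos (((8:ℤ):ℝ) * φ)) := by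
    intro φ
    have h1 : ((4:ℤ):ℝ) * φ = 2 * (2 * φ) := by push_cast; ring
    have h2 : ((8:ℤ):ℝ) * φ = 2 * (2 * (2 * φ)) := by push_cast; ring
    rw [h2, h1, Real.cos_two_mul (2 * (2 * φ)), Real.cos_two_mul (2 * φ), trg2]; ring
  simp only [e]
  rw [intervalIntegral.integral_add (Continuous.intervalIntegrable (by fun_prop) _ _) (Continuous.intervalIntegrable (by fun_prop) _ _),
    intervalIntegral.integral_add (Continuous.intervalIntegrable (by fun_prop) _ _) (Continuous.intervalIntegrable (by fun_prop) _ _),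
    intervalIntegral.integral_const_mul, intervalIntegral.integral_const_mul, h, h']
  simp; ring

lemma c21 : coeff (mono p21) 4 2 = rr ^ 4 * Kc 4 2 * (2880 * 64 / 315) * Real.pi := by
  rw [coeff_mono, TI_even p21 4 2 1 (by decide)]
  have := JJ_21; have h2 := I2
  simp only [p21, deg] at *
  rw [show 4 + (2:ℤ).natAbs = 6 from rfl, this, h2]
lemma c03 : coeff (mono p03) 4 2 = rr ^ 6 * Kc 4 2 * (-(2880 * 1024 / 3465)) * (3 / 4 * Real.pi) := by
  rw [coeff_mono, TI_even p03 4 2 1 (by decide)]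
  have := JJ_03; have h2 := I4
  simp only [p03, deg] at *
  rw [show 4 + (2:ℤ).natAbs = 6 from rfl, this, h2]
lemma c12 : coeff (mono p12) 4 2 = 0 := by
  rw [coeff_mono, TI_even p12 4 2 1 (by decide)]
  have := JJ_12
  simp only [p12, deg] at *
  rw [show 4 + (2:ℤ).natAbs = 6 from rfl, this]; simp

def ll : L1 →L[ℝ] ℝ := cf 4 2 (by decide)
lemma ll_apply (u : L1) : ll u = coeff (ser mono u) 4 2 := rfl
lemma ll_bas (p : Idx) : ll (bas p) = coeff (mono p) 4 2 := by rw [ll_apply, ser_bas]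
lemma ll_low (p : Idx) (h : deg p < 4) : ll (bas p) = 0 := by rw [ll_bas, coeff_mono_zero p 4 2 h]

lemma Kc42_pos : 0 < Kc 4 2 := by
  unfold Kc
  have := Real.pi_pos
  simp only [show (2:ℤ) ≠ 0 by norm_num, if_false]
  positivity

lemma ll_hz (ε : ℝ) (h0 : 0 < ε) (h1 : ε ≤ 1) : ll (Dinv (hz ε)) ≠ 0 := by
  have e : ll (Dinv (hz ε)) = -(ε ^ 3 / 36) * coeff (mono p03) 4 2 - hh21 ε / 14 * coeff (mono p21) 4 2 := by
    simp only [hz, map_add, map_smul, Dinv, lift_bas, smul_eq_mul]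
    rw [ll_low p30 (by decide), ll_low p10 (by decide), ll_low p01 (by decide), ll_bas p12, c12, ll_bas, ll_bas]
    simp [dinv, p03, p21, deg]
    norm_num
    ring
  rw [e, c03, c21]
  have hK := Kc42_pos
  have hp := Real.pi_pos
  have : -(ε ^ 3 / 36) * (rr ^ 6 * Kc 4 2 * (-(2880 * 1024 / 3465)) * (3 / 4 * Real.pi)) - hh21 ε / 14 * (rr ^ 4 * Kc 4 2 * (2880 * 64 / 315) * Real.pi)
     = (Kc 4 2 * Real.pi) * (rr ^ 4 * (ε ^ 3 / 36 * rr ^ 2 * (2880 * 1024 / 3465) * (3/4) - hh21 ε / 14 * (2880 * 64 / 315))) := by ring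
  rw [this]
  refine mul_ne_zero (by positivity) (mul_ne_zero (pow_pos rr_pos 4).ne' (ne_of_lt ?_))
  unfold hh21 rr
  have : ε ^ 3 ≤ ε := by nlinarith [mul_nonneg h0.le (sub_nonneg.2 h1), sq_nonneg ε]
  nlinarith

/-- non-triviality -/
lemma coeff_congr {u v : SphereFun} (h : ∀ θ ∈ Set.Icc (0:ℝ) Real.pi, ∀ φ, u θ φ = v θ φ) (n : ℕ) (m : ℤ) :
    coeff u n m = coeff v n m := by
  unfold coeff sInner
  congr 1; ext φ
  apply intervalIntegral.integral_congr
  intro θ hθ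
  rw [Set.uIcc_of_le Real.pi_pos.le] at hθ
  simp only [h θ hθ φ]

lemma coeff_sep (A g : ℝ → ℝ) (n : ℕ) (m : ℤ) : coeff (fun θ φ => A θ * g φ) n m =
    Kc n m * (∫ θ in (0:ℝ)..Real.pi, A θ * (Real.sin θ ^ 2) ^ ((m.natAbs : ℝ)/2) * (DP n (n + m.natAbs)).eval (Real.cos θ) * Real.sin θ)
      * ∫ φ in (0:ℝ)..(2*Real.pi), g φ * trg m φ := by
  unfold coeff sInner
  rw [← intervalIntegral.integral_const_mul]
  congr 1; ext φ
  rw [mul_comm (Kc n m), mul_assoc, mul_comm (intervalIntegral _ _ _ _), ← intervalIntegral.integral_const_mul]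
  congr 1; ext θ
  rw [Ynm_form]; ring

lemma coeff_zon (A : ℝ → ℝ) : coeff (fun θ _ => A θ) 4 2 = 0 := by
  have h := coeff_sep A (fun _ => 1) 4 2
  have h1 := (int_trig0 2 (by norm_num)).1
  simp only [mul_one, one_mul, trg2] at h
  rw [h]
  push_cast at h1
  rw [h1, mul_zero]

open Polynomial in
lemma coeff_Y2 (m : ℤ) (hm : m ∈ Finset.Icc (-2:ℤ) 2) : coeff (Ynm 2 m) 4 2 = 0 := by
  have e : Ynm 2 m = fun θ φ => (Kc 2 m * (Real.sin θ ^ 2) ^ ((m.natAbs : ℝ)/2) * (DP 2 (2 + m.natAbs)).eval (Real.cos θ)) * trg m φ := by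
    ext θ φ; exact Ynm_form 2 m θ φ
  rw [e, coeff_sep]
  rw [Finset.mem_Icc] at hm
  obtain ⟨h1, h2⟩ := hm
  have key : m ≠ 2 → (∫ φ in (0:ℝ)..(2*Real.pi), trg m φ * trg 2 φ) = 0 := by
    intro hne
    by_cases ho : m = -1 ∨ m = 1
    · have := int_trg 1 m (by rcases ho with rfl | rfl <;> decide)
      simp only [trg2]
      rw [← this]; congr 1; ext φ; ring
    · have : m = 0 ∨ m = -2 := by omega
      rcases this with rfl | rfl
      · have := (int_trig0 2 (by norm_num)).1
        push_cast at this
        simpa [trg] using this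
      · have := (int_trig0 4 (by norm_num)).2
        have e2 : ∀ φ : ℝ, trg (-2) φ * trg 2 φ = 1/2 * Real.sin (((4:ℤ):ℝ) * φ) := by
          intro φ
          have : ((4:ℤ):ℝ) * φ = 2 * (2 * φ) := by push_cast; ring
          rw [this, Real.sin_two_mul (2 * φ)]; simp [trg]; ring
        simp only [e2]
        rw [intervalIntegral.integral_const_mul, this, mul_zero]
  by_cases hne : m = 2
  · subst hne
    have hJ : JJ (((1 - X ^ 2) ^ 2 * DP 2 4) * DP 4 (4 + 2)) = 0 := by
      apply JJ_orth
      · exact Dvd.dvd.mul_right (by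
          have : ((1:ℝ[X]) - X ^ 2) ^ 2 = (X ^ 2 - 1) ^ 2 := by ring
          rw [this]) _
      · have h3 : (DP 2 4).natDegree ≤ 0 := by
          unfold DP
          refine (natDegree_iterate_derivative _ _).trans ?_
          have : (((X:ℝ[X]) ^ 2 - 1) ^ 2).natDegree ≤ 4 := by compute_degree
          omega
        have h4 : (((1:ℝ[X]) - X ^ 2) ^ 2).natDegree ≤ 4 := by compute_degree
        have := natDegree_mul_le (p := ((1:ℝ[X]) - X ^ 2) ^ 2) (q := DP 2 4)
        omega
    have : (∫ θ in (0:ℝ)..Real.pi, (Kc 2 2 * (Real.sin θ ^ 2) ^ (((2:ℤ).natAbs : ℝ)/2) * (DP 2 (2 + (2:ℤ).natAbs)).eval (Real.cos θ)) * (Real.sin θ ^ 2) ^ (((2:ℤ).natAbs : ℝ)/2) * (DP 4 (4 + (2:ℤ).natAbs)).eval (Real.cos θ) * Real.sin θ) = Kc 2 2 * JJ (((1 - X ^ 2) ^ 2 * DP 2 4) * DP 4 (4 + 2)) := by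
      unfold JJ
      rw [← intervalIntegral.integral_const_mul]
      congr 1; ext θ
      have hs : 1 - Real.cos θ ^ 2 = Real.sin θ ^ 2 := by linarith [Real.sin_sq_add_cos_sq θ]
      rw [show (((2:ℤ).natAbs : ℝ)/2) = 1 by norm_num, Real.rpow_one, show (2:ℤ).natAbs = 2 from rfl]
      simp only [eval_mul, eval_pow, eval_X, eval_sub, eval_one, hs]
      ring
    rw [this, hJ]; simp
  · rw [key hne, mul_zero]

lemma coeff_sum (s : Finset ℤ) (f : ℤ → SphereFun) (hf : ∀ i, Continuous (Function.uncurry (f i))) (n : ℕ) (m : ℤ) :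
    coeff (fun θ φ => ∑ i ∈ s, f i θ φ) n m = ∑ i ∈ s, coeff (f i) n m := by
  classical
  induction s using Finset.induction_on with
  | empty => simp [coeff, sInner]
  | insert a s ha ih =>
    simp only [Finset.sum_insert ha]
    rw [coeff_add (hf a) (v := fun θ φ => ∑ i ∈ s, f i θ φ), ih]
    exact continuous_finset_sum s (fun i _ => hf i)

lemma nontriv_aux {u : SphereFun} (hu : Continuous (Function.uncurry u)) (Y : ℤ → SphereFun) (c : ℤ → ℝ)
    (hY : ∀ m, Continuous (Function.uncurry (Y m))) (s : Finset ℤ) (hY0 : ∀ m ∈ s, coeff (Y m) 4 2 = 0)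
    (z : SphereFun) (hz : Zonal z)
    (he : ∀ θ ∈ Set.Icc (0:ℝ) Real.pi, ∀ φ : ℝ, u θ φ = z θ φ + ∑ m ∈ s, c m * Y m θ φ) :
    coeff u 4 2 = 0 := by
  have hfc : ∀ m, Continuous (Function.uncurry (fun θ φ => c m * Y m θ φ)) := fun m => continuous_const.mul (hY m)
  have hSc : Continuous (Function.uncurry (fun θ φ => ∑ m ∈ s, c m * Y m θ φ)) := continuous_finset_sum _ (fun i _ => hfc i)
  obtain ⟨S, hS⟩ : ∃ S : SphereFun, S = fun θ φ => ∑ m ∈ s, c m * Y m θ φ := ⟨_, rfl⟩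
  have hS' : ∀ θ φ, ∑ m ∈ s, c m * Y m θ φ = S θ φ := fun θ φ => by rw [hS]
  have hS0 : coeff S 4 2 = 0 := by
    rw [hS, coeff_sum s (fun m θ φ => c m * Y m θ φ) hfc]
    apply Finset.sum_eq_zero
    intro m hm
    rw [coeff_smul, hY0 m hm, mul_zero]
  rw [← hS] at hSc
  simp only [hS'] at he
  clear hS hS'
  have hZc : Continuous (fun θ => u θ 0 - S θ 0) :=
    (hu.comp (Continuous.prodMk_left 0)).sub (hSc.comp (Continuous.prodMk_left 0))
  have e1 : coeff u 4 2 = coeff (fun θ φ => (fun θ => u θ 0 - S θ 0) θ + S θ φ) 4 2 := by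
    apply coeff_congr
    intro θ hθ φ
    have a1 := he θ hθ φ
    have a2 := he θ hθ 0
    have a3 := hz θ φ 0
    dsimp only
    linarith
  rw [e1, coeff_add (u := fun θ _ => (fun θ => u θ 0 - S θ 0) θ) (hZc.comp continuous_fst) hSc, hS0, coeff_zon, zero_add]

lemma nontriv {u : SphereFun} (hu : Continuous (Function.uncurry u)) (h : coeff u 4 2 ≠ 0) : SphNontrivial u := by
  rintro ⟨z, c, hz, he⟩
  exact h (nontriv_aux hu (Ynm 2) c (Ynm_cont 2) _ coeff_Y2 z hz he)

lemma nonzonal {u : SphereFun} (h : SphNontrivial u) : ¬ ZonalOn u := by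
  intro hz
  apply h
  refine ⟨fun θ _ => u θ 0, fun _ => 0, fun _ _ _ => rfl, fun θ hθ φ => ?_⟩
  simp [hz θ hθ φ 0]


lemma mono10 (θ φ : ℝ) : mono p10 θ φ = rr * Real.cos θ := by simp [mono, p10, deg]

lemma prof_ev (γt σ : ℝ) (v : L1) (θ φ : ℝ) :
    ser mono ((γt/rr) • bas p10 + σ • v) θ φ = γt * Real.cos θ + σ * ser mono v θ φ := by
  simp only [← ev_eq, map_add, map_smul, ev_bas, mono10, smul_eq_mul]
  have := rr_pos.ne'
  field_simp

lemma euler (γt k c σ δ : ℝ) (v : L1)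
    (hlap : ∀ θ φ, Real.sin θ ≠ 0 → lapS (ser mono v) θ φ = -6 * ev θ φ v + c * (rr * Real.cos θ)
      + δ * (ev θ φ v)^3 - k * ev θ φ v) (hσ : σ * c * rr = 2 * γt)
    (θ : ℝ) (hθ : θ ∈ Set.Ioo (0:ℝ) Real.pi) (φ : ℝ) :
    -γt * dPhi (lapS (ser mono ((γt/rr) • bas p10 + σ • v))) θ φ
      + advect (ser mono ((γt/rr) • bas p10 + σ • v)) (lapS (ser mono ((γt/rr) • bas p10 + σ • v))) θ φ = 0 := by
  set Φ := ser mono ((γt/rr) • bas p10 + σ • v) with hΦ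
  set ψ := ser mono v with hψ
  have hsm : SphSmooth ψ := good_mono.smooth v
  have hP : ∀ θ φ, Φ θ φ = γt * Real.cos θ + σ * ψ θ φ := prof_ev γt σ v
  have hG : ∀ θ ∈ Set.Ioo (0:ℝ) Real.pi, ∀ φ, lapS Φ θ φ = σ * ((-6 - k) * ψ θ φ + δ * (ψ θ φ)^3) := by
    intro θ hθ φ
    have hs : Real.sin θ ≠ 0 := (Real.sin_pos_of_mem_Ioo hθ).ne'
    have h1 := hlap θ φ hs
    rw [hψ, LL_eq] at h1
    rw [hΦ, LL_eq, map_add, map_smul, map_smul, LL_p10 θ φ hs, h1, mono10, ev_eq, ← hψ]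
    have hr := rr_pos.ne'
    simp only [smul_eq_mul]
    have : γt / rr * (-2 * (rr * Real.cos θ)) = - (2 * γt) * Real.cos θ := by field_simp
    rw [this, ← hσ]; ring
  have hs : Real.sin θ ≠ 0 := (Real.sin_pos_of_mem_Ioo hθ).ne'
  have a1 : HasDerivAt (fun t => ψ t φ) (dTheta ψ θ φ) θ := dTheta_has hsm θ φ
  have a2 : HasDerivAt (fun t => ψ θ t) (dPhi ψ θ φ) φ := dPhi_has hsm θ φ
  have b1 : dTheta Φ θ φ = -γt * Real.sin θ + σ * dTheta ψ θ φ := by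
    have : HasDerivAt (fun t => Φ t φ) (γt * (-Real.sin θ) + σ * dTheta ψ θ φ) θ := by
      have := ((Real.hasDerivAt_cos θ).const_mul γt).add (a1.const_mul σ)
      refine this.congr_of_eventuallyEq (Filter.Eventually.of_forall fun t => ?_)
      exact hP t φ
    change deriv (fun t => Φ t φ) θ = _
    rw [this.deriv]; ring
  have b2 : dPhi Φ θ φ = σ * dPhi ψ θ φ := by
    have : HasDerivAt (fun t => Φ θ t) (σ * dPhi ψ θ φ) φ := by
      have := (a2.const_mul σ).const_add (γt * Real.cos θ)
      refine this.congr_of_eventuallyEq (Filter.Eventually.of_forall fun t => ?_)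
      exact hP θ t
    exact this.deriv
  have c1 : dTheta (lapS Φ) θ φ = σ * (-6 - k + 3 * δ * ψ θ φ ^ 2) * dTheta ψ θ φ := by
    have : HasDerivAt (fun t => lapS Φ t φ) (σ * ((-6 - k) * dTheta ψ θ φ + δ * ((3:ℕ) * ψ θ φ ^ (3-1) * dTheta ψ θ φ))) θ := by
      have := ((a1.const_mul (-6 - k)).add ((a1.pow 3).const_mul δ)).const_mul σ
      refine this.congr_of_eventuallyEq ?_
      filter_upwards [Ioo_mem_nhds hθ.1 hθ.2] with t ht
      exact hG t ht φ
    change deriv (fun t => lapS Φ t φ) θ = _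
    rw [this.deriv]; push_cast; ring
  have c2 : dPhi (lapS Φ) θ φ = σ * (-6 - k + 3 * δ * ψ θ φ ^ 2) * dPhi ψ θ φ := by
    have : HasDerivAt (fun t => lapS Φ θ t) (σ * ((-6 - k) * dPhi ψ θ φ + δ * ((3:ℕ) * ψ θ φ ^ (3-1) * dPhi ψ θ φ))) φ := by
      have := ((a2.const_mul (-6 - k)).add ((a2.pow 3).const_mul δ)).const_mul σ
      refine this.congr_of_eventuallyEq (Filter.Eventually.of_forall fun t => ?_)
      exact hG θ hθ t
    change deriv (fun t => lapS Φ θ t) φ = _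
    rw [this.deriv]; push_cast; ring
  unfold advect
  rw [b1, b2, c1, c2]
  field_simp
  ring

lemma ser_per (u : L1) : PeriodicPhi (ser mono u) := by
  intro θ φ
  unfold ser mono
  have : Real.cos (2 * (φ + 2 * Real.pi)) = Real.cos (2 * φ) := by
    rw [show 2 * (φ + 2 * Real.pi) = 2 * φ + 2 * Real.pi + 2 * Real.pi by ring, Real.cos_add_two_pi, Real.cos_add_two_pi]
  simp only [this]

lemma Y10 (γ γt : ℝ) (hγt : γt = Real.sqrt (3/Real.pi) * γ) (θ φ : ℝ) :
    3 * γ * Ynm 1 0 θ φ = 3 / 2 * γt * Real.cos θ := by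
  have h1 : legP 1 (Real.cos θ) = Real.cos θ := by
    unfold legP
    rw [iteratedDeriv_one]
    simp
  have h2 : Real.sqrt ((2*((1:ℕ):ℝ)+1)/(4*Real.pi)) = Real.sqrt (3/Real.pi) / 2 := by
    rw [show (2*((1:ℕ):ℝ)+1)/(4*Real.pi) = (3/Real.pi) / 2 ^ 2 by push_cast; field_simp; norm_num,
      Real.sqrt_div' _ (by positivity), Real.sqrt_sq (by norm_num)]
  unfold Ynm
  rw [if_pos rfl, h1, h2, hγt]; ring

lemma choose_delta (γt ε : ℝ) (h0 : 0 < ε) (h1 : ε ≤ 1) : ∃ (δ c : ℝ) (h : L1), 0 < δ ∧ FF ε (δ, h) = 0 ∧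
    c = 4 - δ * coord p10 h + δ * (coord p01 h / ε) ∧ c ≠ 0 ∧ |2 * γt / (c * rr) - γt / (2 * rr)| ≤ ε ∧
    |2 * γt / (c * rr)| * (δ * ‖Dinv h‖) ≤ ε ∧ ll (Dinv h) ≠ 0 := by
  obtain ⟨H, hH, hF⟩ := solve ε
  have hid : Filter.Tendsto (fun δ : ℝ => δ) (nhds 0) (nhds 0) := Filter.tendsto_id
  have t10 : Filter.Tendsto (fun δ => coord p10 (H δ)) (nhds 0) (nhds (coord p10 (hz ε))) :=
    ((coord p10).continuous.tendsto _).comp hH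
  have t01 : Filter.Tendsto (fun δ => coord p01 (H δ)) (nhds 0) (nhds (coord p01 (hz ε))) :=
    ((coord p01).continuous.tendsto _).comp hH
  have tD : Filter.Tendsto (fun δ => Dinv (H δ)) (nhds 0) (nhds (Dinv (hz ε))) :=
    (Dinv.continuous.tendsto _).comp hH
  have tl : Filter.Tendsto (fun δ => ll (Dinv (H δ))) (nhds 0) (nhds (ll (Dinv (hz ε)))) :=
    (ll.continuous.tendsto _).comp tD
  have tc : Filter.Tendsto (fun δ => 4 - δ * coord p10 (H δ) + δ * (coord p01 (H δ) / ε)) (nhds 0) (nhds 4) := by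
    have := (((hid.mul t10).const_sub 4).add (hid.mul (t01.div_const ε)))
    simpa using this
  have ts : Filter.Tendsto (fun δ => 2 * γt / ((4 - δ * coord p10 (H δ) + δ * (coord p01 (H δ) / ε)) * rr)) (nhds 0)
      (nhds (2 * γt / (4 * rr))) :=
    Filter.Tendsto.div tendsto_const_nhds (tc.mul_const rr) (by have := rr_pos; positivity)
  have e4 : 2 * γt / (4 * rr) = γt / (2 * rr) := by
    have := rr_pos.ne'
    field_simp; ring
  have t1 : Filter.Tendsto (fun δ => |2 * γt / ((4 - δ * coord p10 (H δ) + δ * (coord p01 (H δ) / ε)) * rr) - γt / (2 * rr)|) (nhds 0)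
      (nhds 0) := by
    have := (ts.sub_const (γt / (2 * rr))).abs
    rw [e4] at this; simpa using this
  have t2 : Filter.Tendsto (fun δ => |2 * γt / ((4 - δ * coord p10 (H δ) + δ * (coord p01 (H δ) / ε)) * rr)| * (δ * ‖Dinv (H δ)‖)) (nhds 0)
      (nhds 0) := by
    have := ts.abs.mul (hid.mul tD.norm)
    simpa using this
  have ev1 := hF.and ((tc.eventually_ne (by norm_num : (4:ℝ) ≠ 0)).and ((t1.eventually (ge_mem_nhds h0)).and
    ((t2.eventually (ge_mem_nhds h0)).and (tl.eventually_ne (ll_hz ε h0 h1)))))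
  have ev2 := (ev1.filter_mono (nhdsWithin_le_nhds (s := Set.Ioi (0:ℝ)))).and self_mem_nhdsWithin
  obtain ⟨δ, ⟨a1, a2, a3, a4, a5⟩, a6⟩ := ev2.exists
  exact ⟨δ, _, H δ, a6, a1, rfl, a2, a3, a4, a5⟩

theorem main_aux (γ γt : ℝ) (hγ : γ ≠ 0)
    (hγt : γt = Real.sqrt (3/Real.pi) * γ) :
    ∃ (lam M ε₀ : ℝ), 0 < lam ∧ 0 < M ∧ 0 < ε₀ ∧
      ∀ ε : ℝ, 0 < ε → ε ≤ ε₀ →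
        ∃ Φ : SphereFun,
          SphSmooth Φ ∧ PeriodicPhi Φ ∧ RealAnalyticSphere Φ ∧
          (∀ θ ∈ Set.Ioo (0:ℝ) Real.pi, ∀ φ : ℝ,
            -γt * dPhi (lapS Φ) θ φ + advect Φ (lapS Φ) θ φ = 0) ∧
          gevNormSq lam (fun θ φ => 3*γ*Ynm 1 0 θ φ - Φ θ φ)
            ≤ ENNReal.ofReal ((M*ε)^2) ∧
          coeff Φ 4 2 ≠ 0 ∧
          ¬ ZonalOn Φ ∧ SphNontrivial Φ := by
  obtain ⟨C, hC, hCb⟩ := gev_bound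
  have hr := rr_pos
  have hg : γt ≠ 0 := by
    rw [hγt]; exact mul_ne_zero (Real.sqrt_pos.2 (by positivity)).ne' hγ
  refine ⟨1/2, C * (|γt / (2 * rr)| + 3), 1, by norm_num, by positivity, one_pos, fun ε h0 h1 => ?_⟩
  obtain ⟨δ, c, h, hδ, hF, hc, hc0, hb1, hb2, hl⟩ := choose_delta γt ε h0 h1
  set σ := 2 * γt / (c * rr) with hσ
  have hσ0 : σ ≠ 0 := by rw [hσ]; exact div_ne_zero (by simpa using hg) (mul_ne_zero hc0 hr.ne')
  have hσc : σ * c * rr = 2 * γt := by rw [hσ]; field_simp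
  have hcoeff : coeff (ser mono ((γt/rr) • bas p10 + σ • psi ε (δ, h))) 4 2 ≠ 0 := by
    rw [← ll_apply]
    have : ll ((γt/rr) • bas p10 + σ • psi ε (δ, h)) = σ * (δ * ll (Dinv h)) := by
      simp only [psi, psi0, map_add, map_smul, ll_low p10 (by decide), ll_low p01 (by decide), smul_eq_mul]
      ring
    rw [this]
    exact mul_ne_zero hσ0 (mul_ne_zero hδ.ne' hl)
  refine ⟨ser mono ((γt/rr) • bas p10 + σ • psi ε (δ, h)), good_mono.smooth _, ser_per _,
    ⟨1/2, by norm_num, (hCb _).trans_lt ENNReal.ofReal_lt_top⟩, ?_, ?_, hcoeff,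
    nonzonal (nontriv (ser_cont _) hcoeff), nontriv (ser_cont _) hcoeff⟩
  · intro θ hθ φ
    refine euler γt (δ * (coord p01 h / ε)) c σ δ _ (fun θ φ hs => ?_) hσc θ hθ φ
    rw [psi_lap ε δ h0.ne' h hF θ φ hs, hc]
  · have e : (fun θ φ => 3*γ*Ynm 1 0 θ φ - ser mono ((γt/rr) • bas p10 + σ • psi ε (δ, h)) θ φ) =
        ser mono ((γt / (2 * rr) - σ) • bas p10 + ((-(σ * ε)) • bas p01 + (-(σ * δ)) • Dinv h)) := by
      ext θ φ
      rw [Y10 γ γt hγt, prof_ev]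
      simp only [← ev_eq, psi, psi0, map_add, map_smul, ev_bas, mono10, smul_eq_mul]
      have : (γt / (2 * rr) - σ) * (rr * Real.cos θ) = γt / 2 * Real.cos θ - σ * (rr * Real.cos θ) := by field_simp
      rw [this]; ring
    rw [e]
    refine (hCb _).trans (ENNReal.ofReal_le_ofReal ?_)
    refine pow_le_pow_left₀ (by positivity) ?_ 2
    rw [mul_assoc]
    refine mul_le_mul_of_nonneg_left ?_ hC.le
    have n1 : ‖(γt / (2 * rr) - σ) • bas p10‖ ≤ ε := by
      rw [norm_smul, norm_bas, mul_one, Real.norm_eq_abs, abs_sub_comm]; exact hb1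
    have hs1 : |σ| ≤ |γt / (2 * rr)| + 1 := by
      have := abs_sub_abs_le_abs_sub σ (γt / (2 * rr))
      linarith
    have n2 : ‖(-(σ * ε)) • bas p01‖ ≤ (|γt / (2 * rr)| + 1) * ε := by
      rw [norm_smul, norm_bas, mul_one, Real.norm_eq_abs, abs_neg, abs_mul, abs_of_pos h0]
      exact mul_le_mul_of_nonneg_right hs1 h0.le
    have n3 : ‖(-(σ * δ)) • Dinv h‖ ≤ ε := by
      rw [norm_smul, Real.norm_eq_abs, abs_neg, abs_mul, abs_of_pos hδ, mul_assoc]; exact hb2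
    have := norm_add_le ((γt / (2 * rr) - σ) • bas p10) ((-(σ * ε)) • bas p01 + (-(σ * δ)) • Dinv h)
    have := norm_add_le ((-(σ * ε)) • bas p01) ((-(σ * δ)) • Dinv h)
    linarith

end aux

/-- For `γ ≠ 0` and `γ̃ = √(3/π)γ` there exist real-analytic
non-zonal, non-trivial travelling wave solutions (with wave speed `γ̃`) of the
Euler equations on the non-rotating sphere, arbitrarily close in Gevrey norm to
`3γY₁⁰`.  The travelling wave `Ψ̄(t,θ,φ) = Φ(θ, φ−γ̃t)` is encoded by its
profile `Φ` via the profile equation `−γ̃ ∂_φΩ + ∇⊥Φ·∇Ω = 0`, `Ω = ΔΦ`. -/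
theorem nonzonal_travelling_waves_nonrotating (γ γt : ℝ) (hγ : γ ≠ 0)
    (hγt : γt = Real.sqrt (3/Real.pi) * γ) :
    ∃ (lam M ε₀ : ℝ), 0 < lam ∧ 0 < M ∧ 0 < ε₀ ∧
      ∀ ε : ℝ, 0 < ε → ε ≤ ε₀ →
        ∃ Φ : SphereFun,
          SphSmooth Φ ∧ PeriodicPhi Φ ∧ RealAnalyticSphere Φ ∧
          -- Ψ̄(t,θ,φ) := Φ(θ, φ − γ̃t) is a travelling wave solution of
          -- ∂_tΩ̄ + ∇⊥Ψ̄·∇Ω̄ = 0, Ω̄ = ΔΨ̄, which for the profile reads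
          -- −γ̃ ∂_φ(ΔΦ) + ∇⊥Φ·∇(ΔΦ) = 0
          (∀ θ ∈ Set.Ioo (0:ℝ) Real.pi, ∀ φ : ℝ,
            -γt * dPhi (lapS Φ) θ φ + advect Φ (lapS Φ) θ φ = 0) ∧
          gevNormSq lam (fun θ φ => 3*γ*Ynm 1 0 θ φ - Φ θ φ)
            ≤ ENNReal.ofReal ((M*ε)^2) ∧
          coeff Φ 4 2 ≠ 0 ∧
          ¬ ZonalOn Φ ∧ SphNontrivial Φ := by
  exact main_aux γ γt hγ hγt
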